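/- (Claim (2.4)) Assume d ≥ 4 is such that 7(2/(d+1) + (1 − 2/(d+1)) q(d−1)) < 1. Then for any u > 0, lim_{γ→0} liminf_{N→∞} P[D_{γ,uN^{d−1}}] = 1, where D_{γ,t} = ∩_{|j| ≤ 2N^{2d−1}} {D^j_t > γ N^{2d}}. -/

import Mathlib

open MeasureTheory Filter
open scoped ENNReal Classical

namespace DiscCyl

/-- The lattice `ℤ^{d+1}`. -/
abbrev Lat (d : ℕ) := Fin (d + 1) → ℤ

/-- The discrete cylinder `E = (ℤ/Nℤ)^d × ℤ`. -/
abbrev Cyl (d N : ℕ) := (Fin d → ZMod N) × ℤ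

instance (N : ℕ) : MeasurableSpace (ZMod N) := ⊤

instance (N : ℕ) : Countable (ZMod N) := by
  cases N with
  | zero => exact inferInstanceAs (Countable ℤ)
  | succ n => exact inferInstanceAs (Countable (Fin (n + 1)))

/-- The canonical projection `π_E : ℤ^{d+1} → E`. -/
def projE (d N : ℕ) (v : Lat d) : Cyl d N :=
  (fun i => (v i.castSucc : ZMod N), v (Fin.last d))

/-- The `2(d+1)` unit vectors `±e_i` of `ℤ^{d+1}`. -/
def unitVecs (d : ℕ) : Finset (Lat d) :=
  Finset.image (fun p : Fin (d + 1) × Bool => Pi.single p.1 (if p.2 then (1 : ℤ) else -1))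
    Finset.univ

/-- One-step transition probability of simple random walk on the cylinder:
each of the `2(d+1)` unit moves of `ℤ^{d+1}` is taken with probability `1/(2(d+1))`
and projected to `E`. -/
noncomputable def stepProb (d N : ℕ) (x y : Cyl d N) : ℝ≥0∞ :=
  (((unitVecs d).filter fun e => x + projE d N e = y).card : ℝ≥0∞) / (2 * (d + 1))

/-- `Pl` is the family of laws (indexed by the starting point) of simple random walk
on the cylinder `E = (ℤ/Nℤ)^d × ℤ`. -/
def IsCylRW (d N : ℕ) (Pl : Cyl d N → Measure (ℕ → Cyl d N)) : Prop :=
  (∀ x, IsProbabilityMeasure (Pl x)) ∧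
    ∀ (x : Cyl d N) (n : ℕ) (γ : ℕ → Cyl d N),
      Pl x {ω | ∀ i ≤ n, ω i = γ i} =
        (if γ 0 = x then 1 else 0) * ∏ i ∈ Finset.range n, stepProb d N (γ i) (γ (i + 1))

/-- The lattice `ℤ^ν`. -/
abbrev ZLat (ν : ℕ) := Fin ν → ℤ

/-- Unit vectors of `ℤ^ν`. -/
def zUnitVecs (ν : ℕ) : Set (ZLat ν) :=
  {v | ∃ i, v = Pi.single i 1 ∨ v = Pi.single i (-1)}

/-- One-step transition probability of simple random walk on `ℤ^ν`. -/
noncomputable def zStep (ν : ℕ) (x y : ZLat ν) : ℝ≥0∞ :=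
  if y - x ∈ zUnitVecs ν then (2 * ν : ℝ≥0∞)⁻¹ else 0

/-- `Ql` is the family of laws of simple random walk on `ℤ^ν`. -/
def IsLatRW (ν : ℕ) (Ql : ZLat ν → Measure (ℕ → ZLat ν)) : Prop :=
  (∀ x, IsProbabilityMeasure (Ql x)) ∧
    ∀ (x : ZLat ν) (n : ℕ) (γ : ℕ → ZLat ν),
      Ql x {ω | ∀ i ≤ n, ω i = γ i} =
        (if γ 0 = x then 1 else 0) * ∏ i ∈ Finset.range n, zStep ν (γ i) (γ (i + 1))

/-- `q(ν)`: the return probability to the origin of simple random walk on `ℤ^ν`. -/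
noncomputable def retProb (ν : ℕ) (Ql : ZLat ν → Measure (ℕ → ZLat ν)) : ℝ :=
  ((Ql 0) {ω | ∃ n : ℕ, 1 ≤ n ∧ ω n = 0}).toReal

/-- Entrance time `H_U` (with value `⊤` if `U` is never entered). -/
noncomputable def entT {X : Type*} (U : Set X) (ω : ℕ → X) : ℕ∞ :=
  sInf {t : ℕ∞ | ∃ n : ℕ, ω n ∈ U ∧ t = n}

/-- Exit time `T_U`. -/
noncomputable def exitT {X : Type*} (U : Set X) (ω : ℕ → X) : ℕ∞ :=
  entT Uᶜ ω

/-- `after t f ω = t + f (θ_t ω)`, with value `⊤` when `t = ⊤`. -/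
noncomputable def after {X : Type*} (t : ℕ∞) (f : (ℕ → X) → ℕ∞) (ω : ℕ → X) : ℕ∞ :=
  t.recTopCoe ⊤ fun m => (m : ℕ∞) + f fun k => ω (k + m)

/-- The block `C_j = (ℤ/Nℤ)^d × ([(j-3/4)N, (j+3/4)N] ∩ ℤ)`. -/
def Cblk (d N : ℕ) (j : ℤ) : Set (Cyl d N) :=
  {x | ((j : ℝ) - 3 / 4) * N ≤ (x.2 : ℝ) ∧ (x.2 : ℝ) ≤ ((j : ℝ) + 3 / 4) * N}

/-- The block `B_j = (ℤ/Nℤ)^d × [(j-1)N, (j+1)N]`. -/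
def Bblk (d N : ℕ) (j : ℤ) : Set (Cyl d N) :=
  {x | (j - 1) * (N : ℤ) ≤ x.2 ∧ x.2 ≤ (j + 1) * (N : ℤ)}

/-- The block `B̃_j = (ℤ/Nℤ)^d × [(j-2)N+1, (j+2)N-1]`. -/
def Btl (d N : ℕ) (j : ℤ) : Set (Cyl d N) :=
  {x | (j - 2) * (N : ℤ) + 1 ≤ x.2 ∧ x.2 ≤ (j + 2) * (N : ℤ) - 1}

/-- `D^j_1`: time of the first departure from `B̃_j` after the first return to `B_j`. -/
noncomputable def oneExc (d N : ℕ) (j : ℤ) (ω : ℕ → Cyl d N) : ℕ∞ :=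
  after (entT (Bblk d N j) ω) (exitT (Btl d N j)) ω

/-- `D^j_k`: time of the `k`-th departure from `B̃_j` (after successive returns to `B_j`). -/
noncomputable def DD (d N : ℕ) (j : ℤ) : ℕ → (ℕ → Cyl d N) → ℕ∞
  | 0, _ => 0
  | k + 1, ω => after (DD d N j k ω) (oneExc d N j) ω

/-- The law `P` of the walk with initial distribution uniform on `B_0`. -/
noncomputable def lawP (d N : ℕ) (Pl : Cyl d N → Measure (ℕ → Cyl d N)) :
    Measure (ℕ → Cyl d N) :=
  ((N : ℝ≥0∞) ^ d * (2 * N + 1))⁻¹ •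
    Measure.sum fun x : Cyl d N => if x ∈ Bblk d N 0 then Pl x else 0

/-- Nearest-neighbour adjacency on the cylinder. -/
def adj (d N : ℕ) (x y : Cyl d N) : Prop :=
  x ≠ y ∧ ∃ e ∈ unitVecs d, y = x + projE d N e

/-- `x` and `y` are connected by a nearest-neighbour path inside `S`. -/
def connIn (d N : ℕ) (S : Set (Cyl d N)) (x y : Cyl d N) : Prop :=
  Relation.ReflTransGen (fun a b => a ∈ S ∧ b ∈ S ∧ adj d N a b) x y

/-- `S` is a connected set. -/
def IsConnIn (d N : ℕ) (S : Set (Cyl d N)) : Prop :=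
  ∀ x ∈ S, ∀ y ∈ S, connIn d N S x y

/-- The boundary `∂U`. -/
def bdry (d N : ℕ) (U : Set (Cyl d N)) : Set (Cyl d N) :=
  {x | x ∉ U ∧ ∃ y ∈ U, adj d N x y}

/-- `ℓ^∞`-norm on `ℤ^{d+1}`. -/
def linf {d : ℕ} (v : Lat d) : ℕ := Finset.univ.sup fun i => (v i).natAbs

/-- `ℓ^∞`-distance induced on the cylinder. -/
noncomputable def cylDist (d N : ℕ) (x y : Cyl d N) : ℕ :=
  sInf {r : ℕ | ∃ v : Lat d, projE d N v = y - x ∧ linf v = r}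

/-- `S` has `ℓ^∞`-diameter at least `L`. -/
def diamGE (d N : ℕ) (S : Set (Cyl d N)) (L : ℕ) : Prop :=
  ∃ x ∈ S, ∃ y ∈ S, L ≤ cylDist d N x y

/-- `X_{[0,n]}`: the set of points visited up to time `n`. -/
def ran {X : Type*} (ω : ℕ → X) (n : ℕ) : Set X := {y | ∃ i ≤ n, ω i = y}

/-- The set of points visited up to the (possibly infinite) time `t`. -/
def ranE {X : Type*} (ω : ℕ → X) (t : ℕ∞) : Set X :=
  {y | ∃ i : ℕ, (i : ℕ∞) ≤ t ∧ ω i = y}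

/-- `L_m`: projections to `E` of `m`-dimensional affine coordinate lattices of `ℤ^{d+1}`. -/
def Lcoll (d N m : ℕ) : Set (Set (Cyl d N)) :=
  {F | ∃ I : Finset (Fin (d + 1)), I.card = m ∧ ∃ y : Lat d,
      F = (fun v => projE d N (y + v)) '' {v : Lat d | ∀ i ∉ I, v i = 0}}

/-- `A^j_m`: nonempty subsets of `C_j` contained in some `F ∈ L_m`. -/
def Adm (d N : ℕ) (j : ℤ) (m : ℕ) : Set (Finset (Cyl d N)) :=
  {A | A.Nonempty ∧ ↑A ⊆ Cblk d N j ∧ ∃ F ∈ Lcoll d N m, (↑A : Set (Cyl d N)) ⊆ F}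

/-- The segment `{x + k·e : 0 ≤ k ≤ L}` (addition via `π_E`). -/
def segment (d N : ℕ) (x : Cyl d N) (e : Lat d) (L : ℕ) : Set (Cyl d N) :=
  {y | ∃ k : ℕ, k ≤ L ∧ y = x + projE d N ((k : ℤ) • e)}

/-- The event `V_{K,j,t}` (with `k = ⌊t⌋` excursions). -/
def Vev (d N : ℕ) (K : ℝ) (j : ℤ) (k : ℕ) : Set (ℕ → Cyl d N) :=
  {ω | ∀ x ∈ Cblk d N j, ∀ e ∈ unitVecs d, ∃ i : ℕ, (i : ℝ) < Real.sqrt N ∧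
      ∀ l : ℕ, i ≤ l → l ≤ i + ⌊K * Real.log N⌋₊ →
        x + projE d N ((l : ℤ) • e) ∉ ranE ω (DD d N j k ω)}

/-- The event `U_{K,j,t}` (with `k = ⌊t⌋` excursions). -/
def Uev (d N : ℕ) (K : ℝ) (j : ℤ) (k : ℕ) : Set (ℕ → Cyl d N) :=
  {ω | ∀ F ∈ Lcoll d N 2, ∀ n : ℕ, (n : ℕ∞) ≤ DD d N j k ω →
      ∀ O₁ O₂ : Set (Cyl d N),
        O₁ ⊆ (F ∩ Cblk d N j) \ ran ω n → O₂ ⊆ (F ∩ Cblk d N j) \ ran ω n →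
        IsConnIn d N O₁ → IsConnIn d N O₂ →
        diamGE d N O₁ ⌊K * Real.log N⌋₊ → diamGE d N O₂ ⌊K * Real.log N⌋₊ →
        ∀ p ∈ O₁, ∀ q ∈ O₂, connIn d N ((F ∩ Cblk d N j) \ ran ω n) p q}

/-- A (finite) set `S` disconnects the cylinder. -/
def Disconnects (d N : ℕ) (S : Set (Cyl d N)) : Prop :=
  S.Finite ∧ ∃ M₀ : ℕ, ∀ M : ℕ, M₀ ≤ M → ∀ x y : Cyl d N,
    (M : ℤ) ≤ x.2 → y.2 ≤ -(M : ℤ) → ¬ connIn d N Sᶜ x y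

/-- The disconnection time `T_N`. -/
noncomputable def discT (d N : ℕ) (ω : ℕ → Cyl d N) : ℕ∞ :=
  sInf {t : ℕ∞ | ∃ n : ℕ, Disconnects d N (ran ω n) ∧ t = n}

/-- `r ≤ t` for `t : ℕ∞` and a real threshold `r` (trivially true when `t = ⊤`). -/
def geReal (t : ℕ∞) (r : ℝ) : Prop := ∀ n : ℕ, t = (n : ℕ∞) → r ≤ n

/-- `r < t` for `t : ℕ∞` and a real threshold `r` (trivially true when `t = ⊤`). -/
def gtReal (t : ℕ∞) (r : ℝ) : Prop := ∀ n : ℕ, t = (n : ℕ∞) → r < n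

/-- `φ_j(z) = E_z[exp(λ Σ_{x∈A} 1{H_x < T_{B̃_j}})]`. -/
noncomputable def phi (d N : ℕ) (Pl : Cyl d N → Measure (ℕ → Cyl d N)) (j : ℤ) (lam : ℝ)
    (A : Finset (Cyl d N)) (z : Cyl d N) : ℝ :=
  ∫ ω, Real.exp (lam * ∑ x ∈ A, if entT {x} ω < exitT (Btl d N j) ω then (1 : ℝ) else 0)
    ∂(Pl z)

/-- `‖φ_j‖_∞`. -/
noncomputable def phiSup (d N : ℕ) (Pl : Cyl d N → Measure (ℕ → Cyl d N)) (j : ℤ) (lam : ℝ)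
    (A : Finset (Cyl d N)) : ℝ :=
  ⨆ z : Cyl d N, phi d N Pl j lam A z

/-- `q_N = sup {P_z[H_F < T_{B̃_j}] : F ∈ L_m, z ∈ ∂F}`. -/
noncomputable def qNval (d N m : ℕ) (Pl : Cyl d N → Measure (ℕ → Cyl d N)) (j : ℤ) : ℝ :=
  sSup {r : ℝ | ∃ F ∈ Lcoll d N m, ∃ z ∈ bdry d N F,
      r = ((Pl z) {ω | entT F ω < exitT (Btl d N j) ω}).toReal}

/-- The times `τ_k`: `τ_0` is the entrance time of `(ℤ/Nℤ)^d × Nℤ`, and `τ_{k+1}` is the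
first time after `τ_k` at which the vertical component has moved by exactly `N`. -/
noncomputable def tauT (d N : ℕ) : ℕ → (ℕ → Cyl d N) → ℕ∞
  | 0, ω => entT {x : Cyl d N | (N : ℤ) ∣ x.2} ω
  | k + 1, ω =>
      (tauT d N k ω).recTopCoe ⊤ fun m =>
        sInf {t : ℕ∞ | ∃ n : ℕ, m < n ∧ ((ω n).2 - (ω m).2).natAbs = N ∧ t = n}

/-- `*`-adjacency on `ℤ²`. -/
def starAdj (x y : ℤ × ℤ) : Prop :=
  x ≠ y ∧ (x.1 - y.1).natAbs ≤ 1 ∧ (x.2 - y.2).natAbs ≤ 1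

/-!
The height of the walk is a lazy symmetric walk on `ℤ`, and each excursion from `B_j` out of `B̃_j`
takes its distance from the level `jN` from at most `N` to at least `2N`. By Tanaka's formula the
total gain of `k` excursions, at least `kN`, is the local time of the height at `jN` plus the
stochastic integral of the excursion sign, so the integral is large as soon as the local time is at
most `kN / 2`. Its steps take place within distance `2N` of `jN`, so its quadratic variation is at
most of order `N` times the maximal local time, and Freedman's exponential inequality makes the
event exponentially unlikely in `k`, which beats the union bound over polynomially many `j`. A
uniform bound on the local times comes from the same inequality: by Tanaka's formula differences of
local times are stochastic integrals over strips, and dyadic chaining over the strips adds them up.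
With `k = uN^{d-1}` and `γN^{2d}` steps the height ranges over `δN^d` levels with
`√γ ≪ δ ≪ u`, while the admissible local time has the larger order `uN^d`.
-/

section LazyWalk

/-- The discrete stochastic integral `∑_{k<n} a_k (s_{k+1} - s_k)` along a path `s`. -/
def stepSum (a : ℕ → ℝ) (s : ℕ → ℤ) (n : ℕ) : ℝ :=
  ∑ k ∈ Finset.range n, a k * (s (k + 1) - s k)

/-- The quadratic variation `∑_{k<n} (a_k (s_{k+1} - s_k))²` of `stepSum a s`. -/
def quadVar (a : ℕ → ℝ) (s : ℕ → ℤ) (n : ℕ) : ℝ :=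
  ∑ k ∈ Finset.range n, (a k * (s (k + 1) - s k)) ^ 2

theorem stepSum_succ (a : ℕ → ℝ) (s : ℕ → ℤ) (n : ℕ) :
    stepSum a s (n + 1) = stepSum a s n + a n * (s (n + 1) - s n) :=
  Finset.sum_range_succ _ n

theorem quadVar_succ (a : ℕ → ℝ) (s : ℕ → ℤ) (n : ℕ) :
    quadVar a s (n + 1) = quadVar a s n + (a n * (s (n + 1) - s n)) ^ 2 :=
  Finset.sum_range_succ _ n

theorem stepSum_neg (a : ℕ → ℝ) (s : ℕ → ℤ) (n : ℕ) :
    stepSum (fun k => -a k) s n = -stepSum a s n := by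
  simp only [stepSum, neg_mul, Finset.sum_neg_distrib]

theorem quadVar_neg (a : ℕ → ℝ) (s : ℕ → ℤ) (n : ℕ) :
    quadVar (fun k => -a k) s n = quadVar a s n := by
  simp only [quadVar, neg_mul, neg_sq]

variable {Ω : Type*} {mΩ : MeasurableSpace Ω}

/-- An integer-valued adapted process whose steps lie in `{-1, 0, 1}` and whose up- and
down-steps are equally likely given the past. It models the vertical component of the walk on
the cylinder; the holding probabilities may depend on the past. -/
structure IsLazySymmetricWalk (ℱ : Filtration ℕ mΩ) (S : ℕ → Ω → ℤ) (μ : Measure Ω) : Prop where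
  measurable (n : ℕ) : Measurable[ℱ n] (S n)
  abs_step_le : ∀ᵐ ω ∂μ, ∀ n, |S (n + 1) ω - S n ω| ≤ 1
  measure_up_eq_down (n : ℕ) (A : Set Ω) : MeasurableSet[ℱ n] A →
    μ (A ∩ {ω | S (n + 1) ω - S n ω = 1}) = μ (A ∩ {ω | S (n + 1) ω - S n ω = -1})

variable {ℱ : Filtration ℕ mΩ} {S : ℕ → Ω → ℤ} {μ : Measure Ω}

theorem measureReal_le_of_ae_imp [IsFiniteMeasure μ] {A B : Set Ω}
    (h : ∀ᵐ ω ∂μ, ω ∈ A → ω ∈ B) : μ.real A ≤ μ.real B :=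
  ENNReal.toReal_mono (measure_ne_top μ B) (measure_mono_ae h)

namespace IsLazySymmetricWalk

theorem measurable_step (hS : IsLazySymmetricWalk ℱ S μ) (n : ℕ) :
    Measurable[ℱ (n + 1)] fun ω => S (n + 1) ω - S n ω :=
  (hS.measurable (n + 1)).sub ((hS.measurable n).mono (ℱ.mono n.le_succ) le_rfl)

theorem setLIntegral_up_eq_down (hS : IsLazySymmetricWalk ℱ S μ) (n : ℕ) {F : Ω → ℝ≥0∞}
    (hF : Measurable[ℱ n] F) :
    ∫⁻ ω in {ω | S (n + 1) ω - S n ω = 1}, F ω ∂μ =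
      ∫⁻ ω in {ω | S (n + 1) ω - S n ω = -1}, F ω ∂μ := by
  rw [← lintegral_trim (ℱ.le n) hF, ← lintegral_trim (ℱ.le n) hF]
  congr 1
  refine @Measure.ext _ (ℱ n) _ _ fun A hA => ?_
  rw [trim_measurableSet_eq _ hA, trim_measurableSet_eq _ hA,
    Measure.restrict_apply (ℱ.le n _ hA), Measure.restrict_apply (ℱ.le n _ hA)]
  exact hS.measure_up_eq_down n A hA

theorem lintegral_step_le (hS : IsLazySymmetricWalk ℱ S μ) (n : ℕ) {F : Ω → ℝ≥0∞}
    {g : Ω → ℤ → ℝ≥0∞} (hF : Measurable[ℱ n] F) (hg : ∀ z, Measurable[ℱ n] fun ω => g ω z)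
    (hg_stay : ∀ ω, g ω 0 ≤ F ω) (hg_move : ∀ ω, g ω 1 + g ω (-1) ≤ F ω + F ω) :
    ∫⁻ ω, g ω (S (n + 1) ω - S n ω) ∂μ ≤ ∫⁻ ω, F ω ∂μ := by
  let U := {ω | S (n + 1) ω - S n ω = 1}
  let D := {ω | S (n + 1) ω - S n ω = -1}
  have hstep : Measurable fun ω => S (n + 1) ω - S n ω :=
    (hS.measurable_step n).mono (ℱ.le _) le_rfl
  have hU : MeasurableSet U := hstep (measurableSet_singleton 1)
  have hD : MeasurableSet D := hstep (measurableSet_singleton (-1))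
  have hUD : Disjoint U D := by
    refine Set.disjoint_left.2 fun ω (h₁ : _ = _) (h₂ : _ = _) => ?_
    omega
  have move : ∫⁻ ω in U ∪ D, g ω (S (n + 1) ω - S n ω) ∂μ ≤ ∫⁻ ω in U ∪ D, F ω ∂μ := by
    have hF' := hF.mono (ℱ.le n) le_rfl
    have hg' := (hg 1).mono (ℱ.le n) le_rfl
    calc ∫⁻ ω in U ∪ D, g ω (S (n + 1) ω - S n ω) ∂μ
        = ∫⁻ ω in U, g ω 1 ∂μ + ∫⁻ ω in D, g ω (-1) ∂μ := by
          rw [lintegral_union hD hUD]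
          congr 1
          · exact setLIntegral_congr_fun hU fun ω (hω : _ = _) => by simp only [hω]
          · exact setLIntegral_congr_fun hD fun ω (hω : _ = _) => by simp only [hω]
      _ = ∫⁻ ω in U, (g ω 1 + g ω (-1)) ∂μ := by
          rw [← hS.setLIntegral_up_eq_down n (hg (-1)), ← lintegral_add_left hg']
      _ ≤ ∫⁻ ω in U, (F ω + F ω) ∂μ := lintegral_mono hg_move
      _ = ∫⁻ ω in U ∪ D, F ω ∂μ := by
          rw [lintegral_add_left hF', lintegral_union hD hUD, hS.setLIntegral_up_eq_down n hF]
  have stay : ∫⁻ ω in (U ∪ D)ᶜ, g ω (S (n + 1) ω - S n ω) ∂μ ≤ ∫⁻ ω in (U ∪ D)ᶜ, F ω ∂μ := by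
    refine setLIntegral_mono_ae' (hU.union hD).compl ?_
    filter_upwards [hS.abs_step_le] with ω hω hωUD
    have h_zero : S (n + 1) ω - S n ω = 0 := by
      have := abs_le.1 (hω n)
      simp only [U, D, Set.mem_compl_iff, Set.mem_union, Set.mem_ofPred_eq] at hωUD
      omega
    rw [h_zero]
    exact hg_stay ω
  rw [← lintegral_add_compl _ (hU.union hD), ← lintegral_add_compl F (hU.union hD)]
  exact add_le_add move stay

theorem measurable_mul_step (hS : IsLazySymmetricWalk ℱ S μ) {H : ℕ → Ω → ℝ}
    (hH : ∀ k, Measurable[ℱ k] (H k)) {k n : ℕ} (hkn : k < n) :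
    Measurable[ℱ n] fun ω => H k ω * (S (k + 1) ω - S k ω) := by
  have hstep : Measurable[ℱ n] fun ω => ((S (k + 1) ω - S k ω : ℤ) : ℝ) :=
    measurable_from_top.comp ((hS.measurable_step k).mono (ℱ.mono hkn) le_rfl)
  simp only [Int.cast_sub] at hstep
  exact ((hH k).mono (ℱ.mono hkn.le) le_rfl).mul hstep

theorem measurable_stepSum (hS : IsLazySymmetricWalk ℱ S μ) {H : ℕ → Ω → ℝ}
    (hH : ∀ k, Measurable[ℱ k] (H k)) (n : ℕ) :
    Measurable[ℱ n] fun ω => stepSum (H · ω) (S · ω) n :=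
  Finset.measurable_fun_sum _ fun _ hk => hS.measurable_mul_step hH (Finset.mem_range.1 hk)

theorem measurable_quadVar (hS : IsLazySymmetricWalk ℱ S μ) {H : ℕ → Ω → ℝ}
    (hH : ∀ k, Measurable[ℱ k] (H k)) (n : ℕ) :
    Measurable[ℱ n] fun ω => quadVar (H · ω) (S · ω) n :=
  Finset.measurable_fun_sum _ fun _ hk =>
    (hS.measurable_mul_step hH (Finset.mem_range.1 hk)).pow_const 2

end IsLazySymmetricWalk

/-- The exponential supermartingale `exp (θ M_n - θ² ⟨M⟩_n / 2)` of `M = stepSum a s`. -/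
noncomputable def expSupermartingale (θ : ℝ) (a : ℕ → ℝ) (s : ℕ → ℤ) (n : ℕ) : ℝ :=
  Real.exp (θ * stepSum a s n - θ ^ 2 / 2 * quadVar a s n)

theorem exp_sub_half_sq_add_le_two (a : ℝ) :
    Real.exp (a - a ^ 2 / 2) + Real.exp (-a - a ^ 2 / 2) ≤ 2 := by
  have h_cosh := Real.cosh_le_exp_half_sq a
  rw [Real.cosh_eq] at h_cosh
  rw [Real.exp_sub, Real.exp_sub, ← add_div, div_le_iff₀ (Real.exp_pos _)]
  linarith

namespace IsLazySymmetricWalk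

theorem measurable_expSupermartingale (hS : IsLazySymmetricWalk ℱ S μ) {H : ℕ → Ω → ℝ}
    (hH : ∀ k, Measurable[ℱ k] (H k)) (θ : ℝ) (n : ℕ) :
    Measurable[ℱ n] fun ω => ENNReal.ofReal (expSupermartingale θ (H · ω) (S · ω) n) :=
  (Real.measurable_exp.comp (((hS.measurable_stepSum hH n).const_mul θ).sub
    ((hS.measurable_quadVar hH n).const_mul _))).ennreal_ofReal

theorem lintegral_expSupermartingale_le_one [IsProbabilityMeasure μ]
    (hS : IsLazySymmetricWalk ℱ S μ) {H : ℕ → Ω → ℝ} (hH : ∀ k, Measurable[ℱ k] (H k))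
    (θ : ℝ) (n : ℕ) :
    ∫⁻ ω, ENNReal.ofReal (expSupermartingale θ (H · ω) (S · ω) n) ∂μ ≤ 1 := by
  induction n with
  | zero => simp [expSupermartingale, stepSum, quadVar]
  | succ n ih =>
    let F : Ω → ℝ≥0∞ := fun ω => ENNReal.ofReal (expSupermartingale θ (H · ω) (S · ω) n)
    let factor (ω : Ω) (z : ℤ) : ℝ := θ * H n ω * z - (θ * H n ω * z) ^ 2 / 2
    have hF : Measurable[ℱ n] F := hS.measurable_expSupermartingale hH θ n
    have h_factor (z : ℤ) : Measurable[ℱ n] fun ω => factor ω z := by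
      have := ((hH n).const_mul θ).mul_const (z : ℝ)
      exact this.sub ((this.pow_const 2).div_const 2)
    have h_succ (ω : Ω) : ENNReal.ofReal (expSupermartingale θ (H · ω) (S · ω) (n + 1)) =
        F ω * ENNReal.ofReal (Real.exp (factor ω (S (n + 1) ω - S n ω))) := by
      simp only [F, expSupermartingale]
      rw [← ENNReal.ofReal_mul (Real.exp_pos _).le, ← Real.exp_add, stepSum_succ, quadVar_succ]
      simp only [factor, Int.cast_sub]
      ring_nf
    simp only [h_succ]
    refine (hS.lintegral_step_le (g := fun ω z => F ω * ENNReal.ofReal (Real.exp (factor ω z))) n hF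
      (fun z => hF.mul (Real.measurable_exp.comp (h_factor z)).ennreal_ofReal)
      (fun ω => ?_) fun ω => ?_).trans ih
    · simp [factor]
    · rw [← mul_add, ← ENNReal.ofReal_add (Real.exp_pos _).le (Real.exp_pos _).le, ← mul_two]
      gcongr
      rw [← ENNReal.ofReal_ofNat]
      refine ENNReal.ofReal_le_ofReal ?_
      simpa [factor] using exp_sub_half_sq_add_le_two (θ * H n ω)

end IsLazySymmetricWalk

/-- The integrand `a` switched off from the first time `bad` occurs, so that sums of
`stoppedBefore bad a` freeze there. -/
noncomputable def stoppedBefore (bad : ℕ → Prop) (a : ℕ → ℝ) (k : ℕ) : ℝ :=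
  if ∃ i ≤ k, bad i then 0 else a k

theorem exists_stepSum_stoppedBefore_eq {bad : ℕ → Prop} {T : ℕ} (h : ∃ n ≤ T, bad n)
    (a : ℕ → ℝ) (s : ℕ → ℤ) :
    ∃ τ, bad τ ∧ stepSum (stoppedBefore bad a) s T = stepSum a s τ ∧
      quadVar (stoppedBefore bad a) s T = quadVar a s τ := by
  obtain ⟨n, hnT, hn⟩ := h
  have h_ex : ∃ n, bad n := ⟨n, hn⟩
  have h_le : Nat.find h_ex ≤ T := (Nat.find_min' h_ex hn).trans hnT
  have h_iff (k : ℕ) : (∃ i ≤ k, bad i) ↔ ¬ k < Nat.find h_ex := by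
    rw [not_lt, Nat.find_le_iff]
  have h_filter : {k ∈ Finset.range T | k < Nat.find h_ex} = Finset.range (Nat.find h_ex) := by
    ext k
    simp only [Finset.mem_filter, Finset.mem_range]
    omega
  refine ⟨Nat.find h_ex, Nat.find_spec h_ex, ?_, ?_⟩
  · simp only [stepSum, stoppedBefore, h_iff, ite_not, ite_mul, zero_mul]
    rw [← Finset.sum_filter, h_filter]
  · simp only [quadVar, stoppedBefore, h_iff, ite_not, ite_mul, zero_mul, ite_pow,
      zero_pow two_ne_zero]
    rw [← Finset.sum_filter, h_filter]

theorem measurable_stoppedBefore {bad : Ω → ℕ → Prop} {H : ℕ → Ω → ℝ}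
    (hbad : ∀ i, MeasurableSet[ℱ i] {ω | bad ω i}) (hH : ∀ k, Measurable[ℱ k] (H k)) (k : ℕ) :
    Measurable[ℱ k] fun ω => stoppedBefore (bad ω) (H · ω) k := by
  refine Measurable.ite ?_ measurable_const (hH k)
  have h_union : {ω | ∃ i ≤ k, bad ω i} = ⋃ i ≤ k, {ω | bad ω i} := by ext; simp
  rw [h_union]
  exact .biUnion (Set.to_countable _) fun i hi => ℱ.mono hi _ (hbad i)

namespace IsLazySymmetricWalk

/-- Freedman's inequality for the martingale `stepSum`. -/
theorem measureReal_exists_le_stepSum_le [IsProbabilityMeasure μ]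
    (hS : IsLazySymmetricWalk ℱ S μ) {H : ℕ → Ω → ℝ} (hH : ∀ k, Measurable[ℱ k] (H k))
    (T : ℕ) {lam v : ℝ} (hlam : 0 ≤ lam) (hv : 0 < v) :
    μ.real {ω | ∃ n ≤ T, lam ≤ stepSum (H · ω) (S · ω) n ∧ quadVar (H · ω) (S · ω) n ≤ v} ≤
      Real.exp (-(lam ^ 2 / (2 * v))) := by
  let bad (ω : Ω) (n : ℕ) : Prop :=
    lam ≤ stepSum (H · ω) (S · ω) n ∧ quadVar (H · ω) (S · ω) n ≤ v
  let H' (k : ℕ) (ω : Ω) : ℝ := stoppedBefore (bad ω) (H · ω) k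
  have hH' : ∀ k, Measurable[ℱ k] (H' k) := measurable_stoppedBefore (fun i =>
    (measurableSet_le measurable_const (hS.measurable_stepSum hH i)).inter
      (measurableSet_le (hS.measurable_quadVar hH i) measurable_const)) hH
  let θ := lam / v
  let c := ENNReal.ofReal (Real.exp (-(lam ^ 2 / (2 * v))))
  let Z (ω : Ω) : ℝ≥0∞ := ENNReal.ofReal (expSupermartingale θ (H' · ω) (S · ω) T)
  have hZ : Measurable Z := (hS.measurable_expSupermartingale hH' θ T).mono (ℱ.le T) le_rfl
  have h_large (ω : Ω) (hω : ∃ n ≤ T, bad ω n) : 1 ≤ c * Z ω := by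
    obtain ⟨τ, ⟨h_lam, h_v⟩, h_stepSum, h_quadVar⟩ :=
      exists_stepSum_stoppedBefore_eq hω (H · ω) (S · ω)
    have h_exponent : lam ^ 2 / (2 * v) = θ * lam - θ ^ 2 / 2 * v := by
      simp only [θ]
      field_simp
      ring
    have : 0 ≤ θ := by positivity
    rw [← ENNReal.ofReal_mul (Real.exp_pos _).le, ENNReal.one_le_ofReal, expSupermartingale,
      ← Real.exp_add, Real.one_le_exp_iff, h_stepSum, h_quadVar, h_exponent, neg_add_eq_sub,
      sub_nonneg]
    gcongr
  refine ENNReal.toReal_le_of_le_ofReal (Real.exp_pos _).le ?_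
  calc μ {ω | ∃ n ≤ T, bad ω n}
      ≤ ∫⁻ ω, c * Z ω ∂μ := meas_le_lintegral₀ (hZ.const_mul c).aemeasurable h_large
    _ = c * ∫⁻ ω, Z ω ∂μ := lintegral_const_mul c hZ
    _ ≤ c := mul_le_of_le_one_right' (hS.lintegral_expSupermartingale_le_one hH' θ T)

theorem measureReal_exists_le_abs_stepSum_le [IsProbabilityMeasure μ]
    (hS : IsLazySymmetricWalk ℱ S μ) {H : ℕ → Ω → ℝ} (hH : ∀ k, Measurable[ℱ k] (H k))
    (T : ℕ) {lam v : ℝ} (hlam : 0 ≤ lam) (hv : 0 < v) :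
    μ.real {ω | ∃ n ≤ T, lam ≤ |stepSum (H · ω) (S · ω) n| ∧ quadVar (H · ω) (S · ω) n ≤ v} ≤
      2 * Real.exp (-(lam ^ 2 / (2 * v))) := by
  have h_pos := hS.measureReal_exists_le_stepSum_le hH T hlam hv
  have h_neg := hS.measureReal_exists_le_stepSum_le (fun k => (hH k).neg) T hlam hv
  simp only [Pi.neg_apply, stepSum_neg, quadVar_neg] at h_neg
  rw [two_mul]
  refine (measureReal_mono ?_).trans ((measureReal_union_le _ _).trans (add_le_add h_pos h_neg))
  rintro ω ⟨n, hn, h_lam, h_v⟩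
  exact (le_abs.1 h_lam).imp (⟨n, hn, ·, h_v⟩) (⟨n, hn, ·, h_v⟩)

theorem measureReal_exists_le_abs_sub_le [IsProbabilityMeasure μ]
    (hS : IsLazySymmetricWalk ℱ S μ) {T : ℕ} (hT : 0 < T) {R : ℝ} (hR : 0 ≤ R) :
    μ.real {ω | ∃ n ≤ T, R ≤ |(S n ω - S 0 ω : ℝ)|} ≤ 2 * Real.exp (-(R ^ 2 / (2 * T))) := by
  have h := hS.measureReal_exists_le_abs_stepSum_le (H := fun _ _ => 1)
    (fun _ => measurable_const) T hR (Nat.cast_pos.2 hT)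
  refine (measureReal_le_of_ae_imp ?_).trans h
  filter_upwards [hS.abs_step_le] with ω hω ⟨n, hn, h_far⟩
  refine ⟨n, hn, ?_, ?_⟩
  · simpa [stepSum, Finset.sum_range_sub (fun k => (S k ω : ℝ))] using h_far
  · calc quadVar (fun _ => 1) (S · ω) n
        ≤ ∑ _k ∈ Finset.range n, (1 : ℝ) := by
          refine Finset.sum_le_sum fun k _ => ?_
          rw [one_mul, sq_le_one_iff_abs_le_one]
          exact_mod_cast hω k
      _ ≤ T := by simpa using hn

end IsLazySymmetricWalk
end LazyWalk

section LocalTime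

/-- The number of times before `n` at which the path `s` steps away from the level `z`; holding
times are not counted. -/
def localTime (s : ℕ → ℤ) (n : ℕ) (z : ℤ) : ℕ :=
  Finset.card {k ∈ Finset.range n | s k = z ∧ s (k + 1) ≠ s k}

variable {s : ℕ → ℤ}

theorem localTime_succ (s : ℕ → ℤ) (n : ℕ) (z : ℤ) :
    localTime s (n + 1) z = localTime s n z + if s n = z ∧ s (n + 1) ≠ s n then 1 else 0 := by
  simp only [localTime, Finset.card_filter, Finset.sum_range_succ]

theorem localTime_succ_le (s : ℕ → ℤ) (n : ℕ) (z : ℤ) :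
    localTime s (n + 1) z ≤ localTime s n z + 1 := by
  rw [localTime_succ]
  split_ifs <;> simp

theorem localTime_eq_zero {n : ℕ} {z : ℤ} (h : ∀ k < n, s k ≠ z) : localTime s n z = 0 := by
  rw [localTime, Finset.card_eq_zero, Finset.filter_eq_empty_iff]
  exact fun k hk hkz => h k (Finset.mem_range.1 hk) hkz.1

theorem abs_eq_abs_add_sign_mul_sub {y y' : ℤ} (h : |y' - y| ≤ 1) :
    |y'| = |y| + y.sign * (y' - y) + if y = 0 ∧ y' ≠ y then 1 else 0 := by
  rw [abs_le] at h
  rcases lt_trichotomy y 0 with hy | rfl | hy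
  · rw [Int.sign_eq_neg_one_of_neg hy, if_neg (by omega), abs_of_neg hy, abs_of_nonpos (by omega)]
    ring
  · obtain rfl | rfl | rfl : y' = -1 ∨ y' = 0 ∨ y' = 1 := by omega
    all_goals simp
  · rw [Int.sign_eq_one_of_pos hy, if_neg (by omega), abs_of_pos hy, abs_of_nonneg (by omega)]
    ring

/-- Tanaka's formula. -/
theorem abs_sub_eq_stepSum_sign_add_localTime (hs : ∀ n, |s (n + 1) - s n| ≤ 1) (n : ℕ) (z : ℤ) :
    |(s n - z : ℝ)| = |(s 0 - z : ℝ)| + stepSum (fun k => (s k - z).sign) s n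
      + localTime s n z := by
  induction n with
  | zero => simp [stepSum, localTime]
  | succ n ih =>
    have h_step := abs_eq_abs_add_sign_mul_sub (y := s n - z) (y' := s (n + 1) - z)
      (by simpa only [sub_sub_sub_cancel_right] using hs n)
    simp only [sub_sub_sub_cancel_right, sub_eq_zero, ne_eq, sub_left_inj] at h_step
    have h_cast := congrArg (Int.cast : ℤ → ℝ) h_step
    push_cast at h_cast
    rw [h_cast, ih, stepSum_succ, localTime_succ]
    push_cast
    ring

theorem quadVar_le_of_localTime_le (hs : ∀ n, |s (n + 1) - s n| ≤ 1) {a : ℕ → ℝ} {C B : ℝ}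
    {I : Finset ℤ} (ha_supp : ∀ k, s k ∉ I → a k = 0) (ha_sq : ∀ k, a k ^ 2 ≤ C) {n : ℕ}
    (hB : ∀ z ∈ I, localTime s n z ≤ B) :
    quadVar a s n ≤ C * (I.card * B) := by
  have hC : 0 ≤ C := (sq_nonneg (a 0)).trans (ha_sq 0)
  calc quadVar a s n
      ≤ ∑ k ∈ Finset.range n, ∑ z ∈ I, if s k = z ∧ s (k + 1) ≠ s k then C else 0 := by
        refine Finset.sum_le_sum fun k _ => ?_
        by_cases hk : s k ∈ I ∧ s (k + 1) ≠ s k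
        · have h_step : ((s (k + 1) - s k : ℝ)) ^ 2 ≤ 1 := by
            rw [sq_le_one_iff_abs_le_one]
            exact_mod_cast hs k
          rw [mul_pow, Finset.sum_eq_single_of_mem (s k) hk.1 fun z _ hz => if_neg fun h =>
            hz h.1.symm, if_pos ⟨rfl, hk.2⟩]
          exact (mul_le_of_le_one_right (sq_nonneg _) h_step).trans (ha_sq k)
        · have h_zero : a k * (s (k + 1) - s k) = 0 := by
            rw [not_and_or, not_not] at hk
            rcases hk with hk | hk
            · rw [ha_supp k hk, zero_mul]
            · rw [hk, sub_self, mul_zero]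
          rw [h_zero, zero_pow two_ne_zero]
          exact Finset.sum_nonneg fun z _ => by split_ifs <;> simp [hC]
    _ = ∑ z ∈ I, C * localTime s n z := by
        rw [Finset.sum_comm]
        refine Finset.sum_congr rfl fun z _ => ?_
        rw [← Finset.sum_filter, Finset.sum_const, nsmul_eq_mul, mul_comm, localTime]
    _ ≤ ∑ _z ∈ I, C * B := Finset.sum_le_sum fun z hz => mul_le_mul_of_nonneg_left (hB z hz) hC
    _ = C * (I.card * B) := by rw [Finset.sum_const, nsmul_eq_mul]; ring

end LocalTime

section Chaining

theorem abs_sub_le_sum_of_dyadic {f : ℕ → ℝ} {r : ℕ → ℝ} {L : ℕ}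
    (h : ∀ l < L, ∀ c < 2 ^ (L - l),
      |f (c * 2 ^ (l + 1)) - f (c * 2 ^ (l + 1) + 2 ^ l)| ≤ r l)
    {y : ℕ} (hy : y < 2 ^ L) : |f y - f 0| ≤ ∑ l ∈ Finset.range L, r l := by
  have h_round (l : ℕ) (hl : l < L) :
      dist (f (y / 2 ^ l * 2 ^ l)) (f (y / 2 ^ (l + 1) * 2 ^ (l + 1))) ≤ r l := by
    let c := y / 2 ^ (l + 1)
    have hc : c < 2 ^ (L - l) := by
      refine Nat.div_lt_of_lt_mul (hy.trans_le ?_)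
      rw [← pow_add]
      exact Nat.pow_le_pow_right two_pos (by omega)
    have h_bound := h l hl c hc
    have h_half : c = y / 2 ^ l / 2 := by rw [Nat.div_div_eq_div_mul, ← pow_succ]
    rw [dist_comm, Real.dist_eq]
    change |f (c * 2 ^ (l + 1)) - f (y / 2 ^ l * 2 ^ l)| ≤ r l
    obtain h_even | h_odd : y / 2 ^ l = 2 * c ∨ y / 2 ^ l = 2 * c + 1 := by omega
    · have : y / 2 ^ l * 2 ^ l = c * 2 ^ (l + 1) := by
        rw [h_even, pow_succ]; ring
      rw [this, sub_self, abs_zero]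
      exact (abs_nonneg _).trans h_bound
    · have : y / 2 ^ l * 2 ^ l = c * 2 ^ (l + 1) + 2 ^ l := by
        rw [h_odd, pow_succ]; ring
      rwa [this]
  have h_sum := dist_le_range_sum_of_dist_le L fun {l} hl => h_round l hl
  rwa [pow_zero, Nat.div_one, mul_one, Nat.div_eq_of_lt hy, zero_mul, Real.dist_eq] at h_sum

theorem sum_range_pow_sub_le {r : ℝ} (hr₀ : 0 ≤ r) (hr₁ : r < 1) (L : ℕ) :
    ∑ l ∈ Finset.range L, r ^ (L - l) ≤ r / (1 - r) := by
  have h_reflect : ∑ l ∈ Finset.range L, r ^ (L - l) = ∑ l ∈ Finset.range L, r * r ^ l := by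
    rw [← Finset.sum_range_reflect]
    refine Finset.sum_congr rfl fun l hl => ?_
    have := Finset.mem_range.1 hl
    rw [← pow_succ', show L - (L - 1 - l) = l + 1 by omega]
  rw [h_reflect, ← Finset.mul_sum, div_eq_mul_inv, ← tsum_geometric_of_lt_one hr₀ hr₁]
  exact mul_le_mul_of_nonneg_left ((summable_geometric_of_lt_one hr₀ hr₁).sum_le_tsum _
    fun l _ => pow_nonneg hr₀ l) hr₀

/-- The difference `sign (z - x) - sign (z - y)`, whose stochastic integral compares the local
times at the levels `x` and `y`; for `x ≤ y` it vanishes unless `z` lies between them. -/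
def stripSign (x y z : ℤ) : ℝ := (z - x).sign - (z - y).sign

theorem stripSign_eq_zero {x y z : ℤ} (hxy : x ≤ y) (hz : z ∉ Finset.Icc x y) :
    stripSign x y z = 0 := by
  rw [Finset.mem_Icc, not_and_or, not_le, not_le] at hz
  rw [stripSign]
  rcases hz with hz | hz
  · rw [Int.sign_eq_neg_one_of_neg (by omega), Int.sign_eq_neg_one_of_neg (by omega), sub_self]
  · rw [Int.sign_eq_one_of_pos (by omega), Int.sign_eq_one_of_pos (by omega), sub_self]

theorem abs_sign_le_one (z : ℤ) : |(z.sign : ℝ)| ≤ 1 := by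
  rcases lt_trichotomy z 0 with hz | rfl | hz
  · simp [Int.sign_eq_neg_one_of_neg hz]
  · simp
  · simp [Int.sign_eq_one_of_pos hz]

theorem stripSign_sq_le (x y z : ℤ) : stripSign x y z ^ 2 ≤ 4 := by
  have h_abs : |stripSign x y z| ≤ 2 :=
    (abs_sub _ _).trans (by linarith [abs_sign_le_one (z - x), abs_sign_le_one (z - y)])
  calc stripSign x y z ^ 2 = |stripSign x y z| ^ 2 := (sq_abs _).symm
    _ ≤ 2 ^ 2 := by gcongr
    _ = 4 := by norm_num

/-- `stripSign` for the two levels that the `l`-th stage of the dyadic chaining above the base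
level `b` compares: an odd multiple of `2 ^ l` and the even one below it. -/
def dyadicStripSign (b : ℤ) (l c : ℕ) (z : ℤ) : ℝ :=
  stripSign (b + (c * 2 ^ (l + 1) : ℕ)) (b + (c * 2 ^ (l + 1) + 2 ^ l : ℕ)) z

/-- The exceptional event of the chaining step at the strip `(b, l, c)`: the stochastic integral
of `dyadicStripSign` exceeds its share of the total budget `K / 4`, although its quadratic
variation is as small as local times of at most `2 * K` make it. -/
def ExceedsStripBound (K : ℝ) (L : ℕ) (b : ℤ) (l c : ℕ) (s : ℕ → ℤ) (n : ℕ) : Prop :=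
  K / 12 * (3 / 4) ^ (L - l) ≤ |stepSum (fun k => dyadicStripSign b l c (s k)) s n| ∧
    quadVar (fun k => dyadicStripSign b l c (s k)) s n ≤ 16 * 2 ^ l * K

theorem stepSum_stripSign (s : ℕ → ℤ) (x y : ℤ) (n : ℕ) :
    stepSum (fun k => stripSign x y (s k)) s n =
      stepSum (fun k => (s k - x).sign) s n - stepSum (fun k => (s k - y).sign) s n := by
  simp only [stepSum, stripSign, sub_mul, Finset.sum_sub_distrib]

variable {s : ℕ → ℤ}

theorem quadVar_dyadicStripSign_le (hs : ∀ n, |s (n + 1) - s n| ≤ 1) {n : ℕ} {B : ℝ}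
    (hB : ∀ z, localTime s n z ≤ B) (b : ℤ) (l c : ℕ) :
    quadVar (fun k => dyadicStripSign b l c (s k)) s n ≤ 8 * 2 ^ l * B := by
  have h_le : b + (c * 2 ^ (l + 1) : ℕ) ≤ b + (c * 2 ^ (l + 1) + 2 ^ l : ℕ) := by
    gcongr; exact Nat.le_add_right _ _
  have hB₀ : 0 ≤ B := (Nat.cast_nonneg _).trans (hB 0)
  refine (quadVar_le_of_localTime_le hs (fun k hk => stripSign_eq_zero h_le hk)
    (fun k => stripSign_sq_le _ _ _) fun z _ => hB z).trans ?_
  have h_card : (Finset.Icc (b + (c * 2 ^ (l + 1) : ℕ)) (b + (c * 2 ^ (l + 1) + 2 ^ l : ℕ))).card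
      = 2 ^ l + 1 := by
    rw [Int.card_Icc, ← Int.toNat_natCast (2 ^ l + 1)]
    congr 1
    push_cast
    ring
  have h_one : (1 : ℝ) ≤ 2 ^ l := one_le_pow₀ one_le_two
  rw [h_card]
  push_cast
  nlinarith

theorem localTime_le_of_abs_stepSum_dyadicStripSign_le (hs : ∀ n, |s (n + 1) - s n| ≤ 1)
    {n L : ℕ} {b : ℤ} {r : ℕ → ℝ} (h_above : ∀ k < n, b < s k)
    (h_strip : ∀ l < L, ∀ c < 2 ^ (L - l),
      |stepSum (fun k => dyadicStripSign b l c (s k)) s n| ≤ r l)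
    {z : ℤ} (hbz : b ≤ z) (hzb : z < b + 2 ^ L) :
    localTime s n z ≤ 2 * |(s n - s 0 : ℝ)| + ∑ l ∈ Finset.range L, r l := by
  let V (y : ℕ) : ℝ := stepSum (fun k => (s k - (b + y)).sign) s n
  obtain ⟨y, rfl⟩ : ∃ y : ℕ, z = b + y := ⟨(z - b).toNat, by omega⟩
  have h_chain : |V y - V 0| ≤ ∑ l ∈ Finset.range L, r l := by
    refine abs_sub_le_sum_of_dyadic (fun l hl c hc => ?_) (by zify; omega)
    simpa only [V, dyadicStripSign, stepSum_stripSign] using h_strip l hl c hc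
  have h_base : V 0 = s n - s 0 := by
    have h_sign : ∀ k ∈ Finset.range n, (((s k - (b + (0 : ℕ))).sign : ℝ)) * (s (k + 1) - s k) =
        s (k + 1) - s k := fun k hk => by
      have := h_above k (Finset.mem_range.1 hk)
      rw [Int.sign_eq_one_of_pos (by omega), Int.cast_one, one_mul]
    exact (Finset.sum_congr rfl h_sign).trans (Finset.sum_range_sub (fun k => (s k : ℝ)) n)
  have h_tanaka := abs_sub_eq_stepSum_sign_add_localTime hs n (b + y)
  have h_tri : |(s n - (b + y : ℤ) : ℝ)| ≤ |(s n - s 0 : ℝ)| + |(s 0 - (b + y : ℤ) : ℝ)| :=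
    abs_sub_le _ _ _
  rw [abs_le] at h_chain
  have := neg_abs_le (s n - s 0 : ℝ)
  change _ = _ + V y + _ at h_tanaka
  linarith

/-- The strips turn a bound `2 * K` on all local times into the bound `K`, and local times grow
by at most one per step, so the bound `K` propagates. -/
theorem localTime_le_of_not_exceedsStripBound (hs : ∀ n, |s (n + 1) - s n| ≤ 1) {T L : ℕ}
    {b : ℤ} {K : ℝ} (hK : 2 ^ (L + 2) ≤ K) (h_box : ∀ n ≤ T, b < s n ∧ s n < b + 2 ^ L)
    (h_strip : ∀ n ≤ T, ∀ l < L, ∀ c < 2 ^ (L - l), ¬ ExceedsStripBound K L b l c s n) :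
    ∀ n ≤ T, ∀ z, localTime s n z ≤ K := by
  have hK₁ : 1 ≤ K := (one_le_pow₀ one_le_two).trans hK
  intro n
  induction n with
  | zero => exact fun _ z => by simpa [localTime] using zero_le_one.trans hK₁
  | succ n ih =>
    intro hn z
    have h_double (z : ℤ) : (localTime s (n + 1) z : ℝ) ≤ 2 * K := by
      have h_succ : (localTime s (n + 1) z : ℝ) ≤ localTime s n z + 1 := by
        exact_mod_cast localTime_succ_le s n z
      linarith [ih (by omega) z]
    by_cases hz : b ≤ z ∧ z < b + 2 ^ L
    · have h_chain := localTime_le_of_abs_stepSum_dyadicStripSign_le hs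
        (fun k hk => (h_box k (by omega)).1) (fun l hl c hc => le_of_not_ge fun h_large =>
          h_strip (n + 1) hn l hl c hc ⟨h_large,
            (quadVar_dyadicStripSign_le hs h_double b l c).trans_eq (by ring)⟩) hz.1 hz.2
      have h_geom : ∑ l ∈ Finset.range L, K / 12 * (3 / 4) ^ (L - l) ≤ K / 4 := by
        have := sum_range_pow_sub_le (r := 3 / 4) (by norm_num) (by norm_num) L
        rw [← Finset.mul_sum]
        nlinarith
      have h_diam : |(s (n + 1) - s 0 : ℝ)| ≤ K / 4 := by
        have h_int : |s (n + 1) - s 0| ≤ 2 ^ L := by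
          have := h_box (n + 1) hn
          have := h_box 0 (by omega)
          rw [abs_le]
          omega
        have h_real : |(s (n + 1) - s 0 : ℝ)| ≤ 2 ^ L := by exact_mod_cast h_int
        rw [pow_add] at hK
        linarith
      linarith
    · have h_never (k : ℕ) (hk : k < n + 1) : s k ≠ z := by
        rintro rfl
        exact hz ⟨(h_box k (by omega)).1.le, (h_box k (by omega)).2⟩
      rw [localTime_eq_zero h_never, Nat.cast_zero]
      exact zero_le_one.trans hK₁

end Chaining

section LocalTimeTail

variable {Ω : Type*} {mΩ : MeasurableSpace Ω} {ℱ : Filtration ℕ mΩ} {S : ℕ → Ω → ℤ}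
  {μ : Measure Ω} [IsProbabilityMeasure μ]

theorem mul_le_dyadic_exponent {K : ℝ} (hK : 0 < K) {l L : ℕ} (hl : l < L) :
    (L - l : ℕ) * (K / (36864 * 2 ^ L)) ≤
      (K / 12 * (3 / 4) ^ (L - l)) ^ 2 / (2 * (16 * 2 ^ l * K)) := by
  obtain ⟨m, rfl⟩ := Nat.exists_eq_add_of_le hl.le
  rw [Nat.add_sub_cancel_left]
  have h_bernoulli : (m : ℝ) / 8 ≤ (9 / 8) ^ m := by
    have := one_add_mul_le_pow (a := (1 / 8 : ℝ)) (by norm_num) m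
    norm_num at this ⊢
    linarith
  have h_pow : ((3 / 4 : ℝ) ^ m) ^ 2 * 2 ^ m = (9 / 8) ^ m := by
    rw [← pow_mul, mul_comm m, pow_mul, ← mul_pow]
    norm_num
  have h_eq : (K / 12 * (3 / 4) ^ m) ^ 2 / (2 * (16 * 2 ^ l * K)) =
      (9 / 8) ^ m * (K / (4608 * 2 ^ (l + m))) := by
    rw [← h_pow, pow_add]
    field_simp
    norm_num
  calc (m : ℝ) * (K / (36864 * 2 ^ (l + m)))
      = m / 8 * (K / (4608 * 2 ^ (l + m))) := by ring
    _ ≤ (9 / 8) ^ m * (K / (4608 * 2 ^ (l + m))) := by gcongr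
    _ = _ := h_eq.symm

namespace IsLazySymmetricWalk

theorem measureReal_exceedsStripBound_le (hS : IsLazySymmetricWalk ℱ S μ) (T : ℕ) {K : ℝ}
    (hK : 0 < K) {l L : ℕ} (hl : l < L) (b : ℤ) (c : ℕ) :
    μ.real {ω | ∃ n ≤ T, ExceedsStripBound K L b l c (S · ω) n} ≤
      2 * Real.exp (-(K / (36864 * 2 ^ L))) ^ (L - l) := by
  refine (hS.measureReal_exists_le_abs_stepSum_le
    (H := fun k ω => dyadicStripSign b l c (S k ω))
    (fun k => measurable_from_top.comp (hS.measurable k)) T (by positivity)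
    (by positivity)).trans ?_
  rw [← Real.exp_nat_mul, mul_neg]
  gcongr
  exact mul_le_dyadic_exponent hK hl

theorem measureReal_biUnion_exceedsStripBound_le (hS : IsLazySymmetricWalk ℱ S μ) (T : ℕ) {K : ℝ}
    (hK : 0 < K) (L : ℕ) (b : ℤ) :
    μ.real (⋃ l ∈ Finset.range L, ⋃ c ∈ Finset.range (2 ^ (L - l)),
      {ω | ∃ n ≤ T, ExceedsStripBound K L b l c (S · ω) n}) ≤
      8 * Real.exp (-(K / (36864 * 2 ^ L))) := by
  set q := Real.exp (-(K / (36864 * 2 ^ L)))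
  have hq : 0 < q := Real.exp_pos _
  obtain hq' | hq' := lt_or_ge (1 / 4) q
  · exact measureReal_le_one.trans (by linarith)
  calc _ ≤ ∑ l ∈ Finset.range L, ∑ c ∈ Finset.range (2 ^ (L - l)), 2 * q ^ (L - l) := by
        refine (measureReal_biUnion_finset_le _ _).trans (Finset.sum_le_sum fun l hl => ?_)
        refine (measureReal_biUnion_finset_le _ _).trans (Finset.sum_le_sum fun c _ => ?_)
        exact hS.measureReal_exceedsStripBound_le T hK (Finset.mem_range.1 hl) b c
    _ = 2 * ∑ l ∈ Finset.range L, (2 * q) ^ (L - l) := by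
        rw [Finset.mul_sum]
        refine Finset.sum_congr rfl fun l _ => ?_
        rw [Finset.sum_const, Finset.card_range, nsmul_eq_mul, mul_pow]
        push_cast
        ring
    _ ≤ 2 * (2 * q / (1 - 2 * q)) := by
        gcongr
        exact sum_range_pow_sub_le (by positivity) (by linarith) L
    _ ≤ 2 * (4 * q) := by
        gcongr
        rw [div_le_iff₀ (by linarith)]
        nlinarith
    _ = 8 * q := by ring

theorem measureReal_exists_lt_localTime_le (hS : IsLazySymmetricWalk ℱ S μ) {x : ℤ}
    (hx : ∀ᵐ ω ∂μ, S 0 ω = x) {T : ℕ} (hT : 0 < T) {l : ℕ} {K : ℝ} (hK : 2 ^ (l + 3) ≤ K) :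
    μ.real {ω | ∃ n ≤ T, ∃ z, K < localTime (S · ω) n z} ≤
      2 * Real.exp (-((2 ^ l) ^ 2 / (2 * T))) + 8 * Real.exp (-(K / (73728 * 2 ^ l))) := by
  have hK₀ : 0 < K := (by positivity : (0 : ℝ) < 2 ^ (l + 3)).trans_le hK
  have h_const : K / (73728 * 2 ^ l) = K / (36864 * 2 ^ (l + 1)) := by rw [pow_succ]; ring_nf
  rw [h_const]
  refine le_trans ?_ ((measureReal_union_le _ _).trans <|
    add_le_add (hS.measureReal_exists_le_abs_sub_le hT (R := 2 ^ l) (by positivity))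
      (hS.measureReal_biUnion_exceedsStripBound_le T hK₀ (l + 1) (x - 2 ^ l)))
  refine measureReal_le_of_ae_imp ?_
  filter_upwards [hS.abs_step_le, hx] with ω h_step h_start ⟨n, hn, z, hz⟩
  by_contra h_good
  simp only [Set.mem_union, Set.mem_ofPred_eq, Set.mem_iUnion, Finset.mem_range, not_or,
    not_exists, not_and, not_le] at h_good
  obtain ⟨h_reach, h_strip⟩ := h_good
  refine hz.not_ge (localTime_le_of_not_exceedsStripBound h_step hK (fun m hm => ?_)
    (fun m hm i hi c hc => h_strip i hi c hc m hm) n hn z)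
  have h_int : |S m ω - S 0 ω| < 2 ^ l := by exact_mod_cast h_reach m hm
  rw [h_start, abs_lt] at h_int
  rw [pow_succ]
  omega

end IsLazySymmetricWalk
end LocalTimeTail

section MarkovChain

variable {X : Type*}

/-- The paths `ω` form under `μ` a Markov chain with transition weights `p`; the law of `ω 0` is
arbitrary. -/
def IsMarkovChain [MeasurableSpace X] (p : X → X → ℝ≥0∞) (μ : Measure (ℕ → X)) : Prop :=
  ∀ (n : ℕ) (γ : ℕ → X), μ {ω | ∀ i ≤ n + 1, ω i = γ i} =
    μ {ω | ∀ i ≤ n, ω i = γ i} * p (γ n) (γ (n + 1))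

variable [MeasurableSpace X] [MeasurableSingletonClass X] {p : X → X → ℝ≥0∞} {μ : Measure (ℕ → X)}

theorem measurableSet_cylinder (n : ℕ) (γ : ℕ → X) :
    MeasurableSet {ω : ℕ → X | ∀ i ≤ n, ω i = γ i} := by
  have h_inter : {ω : ℕ → X | ∀ i ≤ n, ω i = γ i} = ⋂ i ≤ n, {ω | ω i = γ i} := by ext; simp
  rw [h_inter]
  exact .biInter (Set.to_countable _) fun i _ => measurable_pi_apply i (measurableSet_singleton _)

variable [Countable X]

theorem measurable_piLE_of_eq {Y : Type*} [MeasurableSpace Y] {f : (ℕ → X) → Y} {n : ℕ}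
    (hf : ∀ ω ω', (∀ i ≤ n, ω i = ω' i) → f ω = f ω') :
    Measurable[Filtration.piLE (X := fun _ : ℕ => X) n] f := by
  let π : (ℕ → X) → (Set.Iic n → X) := Preorder.restrictLe n
  let extend (g : Set.Iic n → X) (i : ℕ) : X := g ⟨min i n, min_le_right i n⟩
  have h_factor : f = (fun g => f (extend g)) ∘ π := funext fun ω => hf _ _ fun i hi => by
    simp [extend, π, Preorder.restrictLe, hi]
  rw [h_factor]
  exact (measurable_of_countable _).comp (comap_measurable π)

namespace IsMarkovChain

theorem measure_cylinder_inter (hμ : IsMarkovChain p μ) (n : ℕ) (γ : ℕ → X) (V : Set X) :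
    μ ({ω | ∀ i ≤ n, ω i = γ i} ∩ {ω | ω (n + 1) ∈ V}) =
      μ {ω | ∀ i ≤ n, ω i = γ i} * ∑' y : V, p (γ n) y := by
  let B := {ω : ℕ → X | ∀ i ≤ n, ω i = γ i}
  have h_meas (y : X) : MeasurableSet ((fun ω : ℕ → X => ω (n + 1)) ⁻¹' {y}) :=
    measurable_pi_apply _ (measurableSet_singleton y)
  have h_point (y : X) : μ.restrict B ((fun ω => ω (n + 1)) ⁻¹' {y}) = μ B * p (γ n) y := by
    have h_set : (fun ω : ℕ → X => ω (n + 1)) ⁻¹' {y} ∩ B =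
        {ω | ∀ i ≤ n + 1, ω i = Function.update γ (n + 1) y i} := by
      ext ω
      simp only [B, Set.mem_inter_iff, Set.mem_preimage, Set.mem_singleton_iff,
        Set.mem_ofPred_eq, Function.update_apply]
      refine ⟨fun h i hi => ?_, fun h => ⟨by simpa using h (n + 1) le_rfl, fun i hi => ?_⟩⟩
      · split_ifs with hin
        · exact hin ▸ h.1
        · exact h.2 i (by omega)
      · simpa [show i ≠ n + 1 by omega] using h i (by omega)
    have h_B : {ω | ∀ i ≤ n, ω i = Function.update γ (n + 1) y i} = B := by
      ext ω
      refine forall₂_congr fun i hi => ?_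
      rw [Function.update_of_ne (by omega)]
    rw [Measure.restrict_apply (h_meas y), h_set, hμ, h_B, Function.update_self,
      Function.update_of_ne (by omega)]
  rw [Set.inter_comm, ← Measure.restrict_apply' (measurableSet_cylinder n γ),
    ← ENNReal.tsum_mul_left]
  simp only [B, ← h_point]
  exact (tsum_measure_preimage_singleton V.to_countable fun y _ => h_meas y).symm

theorem measure_inter_eq_setLIntegral (hμ : IsMarkovChain p μ) {n : ℕ} {A : Set (ℕ → X)}
    (hA : MeasurableSet[Filtration.piLE (X := fun _ : ℕ => X) n] A) (V : X → Set X) :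
    μ (A ∩ {ω | ω (n + 1) ∈ V (ω n)}) = ∫⁻ ω in A, ∑' y : V (ω n), p (ω n) y ∂μ := by
  let π : (ℕ → X) → (Set.Iic n → X) := Preorder.restrictLe n
  have hπ : Measurable π := Preorder.measurable_restrictLe n
  let E := {ω : ℕ → X | ω (n + 1) ∈ V (ω n)}
  suffices h_map : (μ.restrict E).map π =
      (μ.withDensity fun ω => ∑' y : V (ω n), p (ω n) y).map π by
    obtain ⟨A', hA', rfl⟩ := hA
    have h_apply := congrArg (· A') h_map
    simp only [Measure.map_apply hπ hA', withDensity_apply _ (hπ hA'),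
      Measure.restrict_apply (hπ hA')] at h_apply
    exact h_apply
  refine Measure.ext_of_singleton fun g => ?_
  obtain ⟨γ, rfl⟩ : ∃ γ, π γ = g := ⟨fun i => g ⟨min i n, min_le_right i n⟩, by
    ext i
    simp [π, Preorder.restrictLe, min_eq_left i.2.out]⟩
  have h_cyl : π ⁻¹' {π γ} = {ω | ∀ i ≤ n, ω i = γ i} := by
    ext ω
    simp [π, Preorder.restrictLe, funext_iff]
  rw [Measure.map_apply hπ (measurableSet_singleton _),
    Measure.map_apply hπ (measurableSet_singleton _), h_cyl,
    Measure.restrict_apply (measurableSet_cylinder n γ),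
    withDensity_apply _ (measurableSet_cylinder n γ),
    setLIntegral_congr_fun (measurableSet_cylinder n γ)
      (g := fun _ => ∑' y : V (γ n), p (γ n) y) fun ω hω =>
        congrArg (fun x => ∑' y : V x, p x y) (hω n le_rfl),
    setLIntegral_const, mul_comm, ← hμ.measure_cylinder_inter n γ (V (γ n))]
  congr 1
  ext ω
  refine and_congr_right fun hω => ?_
  simp only [E, Set.mem_ofPred_eq, hω n le_rfl]

theorem isLazySymmetricWalk (hμ : IsMarkovChain p μ) (h : X → ℤ)
    (h_step : ∀ x y, p x y ≠ 0 → |h y - h x| ≤ 1)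
    (h_symm : ∀ x, ∑' y : {y | h y - h x = 1}, p x y = ∑' y : {y | h y - h x = -1}, p x y) :
    IsLazySymmetricWalk (Filtration.piLE (X := fun _ : ℕ => X)) (fun n ω => h (ω n)) μ where
  measurable n := measurable_piLE_of_eq fun ω ω' h_eq => congrArg h (h_eq n le_rfl)
  abs_step_le := by
    refine ae_all_iff.2 fun n => ?_
    have h_null := hμ.measure_inter_eq_setLIntegral (n := n) .univ fun x => {y | ¬ |h y - h x| ≤ 1}
    rw [Set.univ_inter] at h_null
    refine (ae_iff.2 (h_null.trans ?_))
    have h_zero (ω : ℕ → X) : ∑' y : ({y | ¬ |h y - h (ω n)| ≤ 1} : Set X), p (ω n) y = 0 :=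
      ENNReal.tsum_eq_zero.2 fun y => by_contra fun hy => y.2 (h_step _ _ hy)
    simp only [h_zero, lintegral_zero]
  measure_up_eq_down n A hA := by
    have h_up := hμ.measure_inter_eq_setLIntegral hA fun x => {y | h y - h x = 1}
    have h_down := hμ.measure_inter_eq_setLIntegral hA fun x => {y | h y - h x = -1}
    exact h_up.trans ((lintegral_congr fun ω : ℕ → X => h_symm (ω n)).trans h_down.symm)

end IsMarkovChain
end MarkovChain

section Cylinder

variable {d N : ℕ}

instance : DiscreteMeasurableSpace (ZMod N) := ⟨fun _ => trivial⟩

theorem mem_unitVecs {e : Lat d} :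
    e ∈ unitVecs d ↔ ∃ i, e = Pi.single i 1 ∨ e = Pi.single i (-1) := by
  simp only [unitVecs, Finset.mem_image, Finset.mem_univ, true_and, Prod.exists, Bool.exists_bool,
    eq_comm (b := e), if_true, Bool.false_eq_true, if_false]
  exact exists_congr fun _ => or_comm

theorem abs_last_le_one {e : Lat d} (he : e ∈ unitVecs d) : |e (Fin.last d)| ≤ 1 := by
  obtain ⟨i, rfl | rfl⟩ := mem_unitVecs.1 he <;>
    by_cases hi : Fin.last d = i <;> simp [hi]

theorem abs_height_sub_le_one {x y : Cyl d N} (h : stepProb d N x y ≠ 0) : |y.2 - x.2| ≤ 1 := by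
  have h_card : ((unitVecs d).filter fun e => x + projE d N e = y).card ≠ 0 := by
    contrapose h
    simp [stepProb, h]
  obtain ⟨e, he⟩ := Finset.card_ne_zero.1 h_card
  obtain ⟨he_mem, rfl⟩ := Finset.mem_filter.1 he
  simpa [projE] using abs_last_le_one he_mem

/-- The reflection of `ℤ^{d+1}` in the last coordinate hyperplane. -/
def reflectLast (e : Lat d) : Lat d := Function.update e (Fin.last d) (-e (Fin.last d))

theorem reflectLast_reflectLast (e : Lat d) : reflectLast (reflectLast e) = e := by
  simp [reflectLast]

theorem reflectLast_mem_unitVecs {e : Lat d} (he : e ∈ unitVecs d) :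
    reflectLast e ∈ unitVecs d := by
  obtain ⟨i, hi⟩ := mem_unitVecs.1 he
  refine mem_unitVecs.2 ⟨i, ?_⟩
  by_cases h_last : i = Fin.last d
  · subst h_last
    rcases hi with rfl | rfl <;> simp [reflectLast, Pi.single, Function.update_idem]
  · rcases hi with rfl | rfl <;> simp [reflectLast, Ne.symm h_last]

theorem projE_reflectLast (e : Lat d) :
    projE d N (reflectLast e) = ((projE d N e).1, -(projE d N e).2) := by
  simp [projE, reflectLast, Fin.castSucc_ne_last]

theorem stepProb_reflect (x : Cyl d N) (y : Fin d → ZMod N) (h : ℤ) :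
    stepProb d N x (y, x.2 - h) = stepProb d N x (y, x.2 + h) := by
  have h_maps {e : Lat d} {h : ℤ}
      (he : e ∈ (unitVecs d).filter fun e => x + projE d N e = (y, x.2 + h)) :
      reflectLast e ∈ (unitVecs d).filter fun e => x + projE d N e = (y, x.2 - h) := by
    obtain ⟨he_mem, he_eq⟩ := Finset.mem_filter.1 he
    rw [Prod.ext_iff] at he_eq
    refine Finset.mem_filter.2 ⟨reflectLast_mem_unitVecs he_mem, ?_⟩
    rw [projE_reflectLast]
    refine Prod.ext he_eq.1 ?_
    rw [← add_left_cancel he_eq.2]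
    exact (sub_eq_add_neg _ _).symm
  rw [stepProb, stepProb]
  congr 2
  refine Finset.card_bij' (fun e _ => reflectLast e) (fun e _ => reflectLast e)
    (fun e he => ?_) (fun e he => h_maps he)
    (fun e _ => reflectLast_reflectLast e) (fun e _ => reflectLast_reflectLast e)
  rw [← sub_neg_eq_add]
  exact h_maps (by rwa [← sub_eq_add_neg])

theorem tsum_stepProb_up_eq_down (x : Cyl d N) :
    ∑' y : {y : Cyl d N | y.2 - x.2 = 1}, stepProb d N x y =
      ∑' y : {y : Cyl d N | y.2 - x.2 = -1}, stepProb d N x y := by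
  let reflect : {y : Cyl d N | y.2 - x.2 = 1} ≃ {y : Cyl d N | y.2 - x.2 = -1} :=
    ((Equiv.refl _).prodCongr (Equiv.subLeft (2 * x.2))).subtypeEquiv fun y => by
      simp only [Set.mem_ofPred_eq, Equiv.prodCongr_apply, Prod.map_snd, Equiv.subLeft_apply]
      omega
  rw [← reflect.tsum_eq]
  refine tsum_congr fun y => ?_
  have h_reflect := stepProb_reflect x y.1.1 (y.1.2 - x.2)
  rw [add_sub_cancel] at h_reflect
  rw [← Prod.mk.eta (p := y.1), ← h_reflect]
  congr 2
  change x.2 - (y.1.2 - x.2) = 2 * x.2 - y.1.2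
  ring

theorem IsCylRW.isMarkovChain {Pl : Cyl d N → Measure (ℕ → Cyl d N)} (hPl : IsCylRW d N Pl)
    (x : Cyl d N) : IsMarkovChain (stepProb d N) (Pl x) := fun n γ => by
  rw [hPl.2, hPl.2, Finset.prod_range_succ, mul_assoc]

theorem IsCylRW.ae_start_eq {Pl : Cyl d N → Measure (ℕ → Cyl d N)} (hPl : IsCylRW d N Pl)
    (x : Cyl d N) : ∀ᵐ ω ∂Pl x, ω 0 = x := by
  have := hPl.1 x
  have h_one : Pl x {ω | ω 0 = x} = 1 := by simpa using hPl.2 x 0 fun _ => x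
  have h_meas : MeasurableSet {ω : ℕ → Cyl d N | ω 0 = x} :=
    (measurable_pi_apply (0 : ℕ) : Measurable fun ω : ℕ → Cyl d N => ω 0)
      (measurableSet_singleton x)
  exact (mem_ae_iff_prob_eq_one h_meas).2 h_one

theorem IsCylRW.isLazySymmetricWalk_height {Pl : Cyl d N → Measure (ℕ → Cyl d N)}
    (hPl : IsCylRW d N Pl) (x : Cyl d N) :
    IsLazySymmetricWalk (Filtration.piLE (X := fun _ : ℕ => Cyl d N)) (fun n ω => (ω n).2)
      (Pl x) :=
  (hPl.isMarkovChain x).isLazySymmetricWalk Prod.snd (fun _ _ => abs_height_sub_le_one)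
    tsum_stepProb_up_eq_down

end Cylinder

section Excursion

theorem entT_eq_coe {X : Type*} {U : Set X} {ω : ℕ → X} {n : ℕ} (h : entT U ω = n) :
    ω n ∈ U ∧ ∀ m < n, ω m ∉ U := by
  have h_ne : {t : ℕ∞ | ∃ n : ℕ, ω n ∈ U ∧ t = n}.Nonempty := by
    by_contra h_empty
    rw [entT, Set.not_nonempty_iff_eq_empty.1 h_empty, sInf_empty] at h
    exact ENat.natCast_ne_top n h.symm
  obtain ⟨n', hn', h_eq⟩ := csInf_mem h_ne
  obtain rfl : n = n' := Nat.cast_injective (h.symm.trans h_eq)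
  refine ⟨hn', fun m hm hmU => hm.not_ge ?_⟩
  have h_le : entT U ω ≤ m := sInf_le ⟨m, hmU, rfl⟩
  exact_mod_cast h ▸ h_le

theorem after_eq_coe {X : Type*} {t : ℕ∞} {f : (ℕ → X) → ℕ∞} {ω : ℕ → X} {n : ℕ}
    (h : after t f ω = n) : ∃ m r : ℕ, t = m ∧ f (fun k => ω (k + m)) = r ∧ m + r = n := by
  induction t using ENat.recTopCoe with
  | top => simp [after] at h
  | coe m =>
    simp only [after, ENat.recTopCoe_natCast] at h
    obtain ⟨r, hr⟩ := ENat.ne_top_iff_exists.1 fun h_top : f (fun k => ω (k + m)) = ⊤ => by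
      simp [h_top] at h
    refine ⟨m, r, rfl, hr.symm, ?_⟩
    rw [← hr] at h
    exact_mod_cast h

variable {d N : ℕ} {j : ℤ} {k : ℕ} {ω : ℕ → Cyl d N}

theorem exists_return_of_DD_succ_eq {n : ℕ} (h : DD d N j (k + 1) ω = n) :
    ∃ m r : ℕ, m ≤ r ∧ r ≤ n ∧ DD d N j k ω = m ∧ (∀ i ∈ Set.Ico m r, ω i ∉ Bblk d N j) ∧
      ω r ∈ Bblk d N j ∧ (∀ i ∈ Set.Ico r n, ω i ∈ Btl d N j) ∧ ω n ∉ Btl d N j := by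
  obtain ⟨m, _, h_prev, h_exc, rfl⟩ := after_eq_coe h
  obtain ⟨a, b, h_ent, h_exit, rfl⟩ := after_eq_coe h_exc
  obtain ⟨h_mem, h_before⟩ := entT_eq_coe h_ent
  obtain ⟨h_out, h_inside⟩ := entT_eq_coe h_exit
  refine ⟨m, m + a, by omega, by omega, h_prev, fun i hi => ?_, ?_, fun i hi => ?_, ?_⟩
  · simpa [hi.1] using h_before (i - m) (Nat.sub_lt_left_of_lt_add hi.1 hi.2)
  · rwa [add_comm]
  · have h_i : i - (m + a) + a + m = i := by have := hi.1; omega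
    simpa [h_i] using h_inside (i - (m + a)) (by have := hi.2; omega)
  · rwa [show m + (a + b) = b + a + m by ring]

theorem eq_zero_or_notMem_Btl_of_DD_eq {n : ℕ} (h : DD d N j k ω = n) :
    n = 0 ∨ ω n ∉ Btl d N j := by
  cases k with
  | zero => exact .inl (Nat.cast_injective h.symm)
  | succ k =>
    obtain ⟨-, -, -, -, -, -, -, -, h_out⟩ := exists_return_of_DD_succ_eq h
    exact .inr h_out

/-- At time `k` the path is on an excursion of the block `j`: it has visited `B_j` and has stayed
in `B̃_j` ever since. -/
def InExcursion (d N : ℕ) (j : ℤ) (ω : ℕ → Cyl d N) (k : ℕ) : Prop :=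
  ∃ i ≤ k, ω i ∈ Bblk d N j ∧ ∀ l ∈ Set.Icc i k, ω l ∈ Btl d N j

/-- The total change, over the steps before `n` that start on an excursion of the block `j`, of the
distance from the height to the level `jN`. -/
noncomputable def excursionGain (d N : ℕ) (j : ℤ) (ω : ℕ → Cyl d N) (n : ℕ) : ℤ :=
  ∑ m ∈ Finset.range n,
    if InExcursion d N j ω m then |(ω (m + 1)).2 - j * N| - |(ω m).2 - j * N| else 0

/-- The side of the level `jN` on which the height lies during excursions of the block `j`, and `0`
otherwise: the integrand of the martingale part of `excursionGain`. -/
noncomputable def excursionSign (d N : ℕ) (j : ℤ) (ω : ℕ → Cyl d N) (k : ℕ) : ℝ :=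
  if InExcursion d N j ω k then ((ω k).2 - j * N).sign else 0

theorem mem_Bblk_iff {x : Cyl d N} : x ∈ Bblk d N j ↔ |x.2 - j * N| ≤ N := by
  simp only [Bblk, Set.mem_ofPred_eq, abs_le, sub_mul, add_mul, one_mul]
  constructor <;> intro <;> constructor <;> linarith

theorem mem_Btl_iff {x : Cyl d N} : x ∈ Btl d N j ↔ |x.2 - j * N| < 2 * N := by
  simp only [Btl, Set.mem_ofPred_eq, abs_lt, sub_mul, add_mul]
  omega

theorem inExcursion_of_height_eq (hN : 0 < N) (h : (ω k).2 = j * N) :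
    InExcursion d N j ω k := by
  refine ⟨k, le_rfl, mem_Bblk_iff.2 (by simp [h]), fun l hl => ?_⟩
  obtain rfl : l = k := le_antisymm hl.2 hl.1
  exact mem_Btl_iff.2 (by simp [h, hN])

theorem mul_le_excursionGain_of_DD_eq {n : ℕ} (h : DD d N j k ω = n) :
    (k * N : ℤ) ≤ excursionGain d N j ω n := by
  let gain (m : ℕ) : ℤ :=
    if InExcursion d N j ω m then |(ω (m + 1)).2 - j * N| - |(ω m).2 - j * N| else 0
  induction k generalizing n with
  | zero =>
    obtain rfl : 0 = n := Nat.cast_injective h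
    simp [excursionGain]
  | succ k ih =>
    obtain ⟨m, r, hmr, hrn, h_prev, h_away, h_return, h_inside, h_out⟩ :=
      exists_return_of_DD_succ_eq h
    have h_gain_away : ∑ i ∈ Finset.Ico m r, gain i = 0 := by
      refine Finset.sum_eq_zero fun i hi => if_neg ?_
      rw [Finset.mem_Ico] at hi
      rintro ⟨i₀, hi₀, h_mem, h_stay⟩
      obtain h_lt | h_ge := lt_or_ge i₀ m
      · obtain rfl | h_out_m := eq_zero_or_notMem_Btl_of_DD_eq h_prev
        · exact absurd h_lt (Nat.not_lt_zero i₀)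
        · exact h_out_m (h_stay m ⟨h_lt.le, hi.1⟩)
      · exact h_away i₀ ⟨h_ge, hi₀.trans_lt hi.2⟩ h_mem
    have h_gain_inside : ∑ i ∈ Finset.Ico r n, gain i = |(ω n).2 - j * N| - |(ω r).2 - j * N| := by
      rw [← Finset.sum_Ico_sub (fun m => |(ω m).2 - j * N|) hrn]
      refine Finset.sum_congr rfl fun i hi => if_pos ?_
      rw [Finset.mem_Ico] at hi
      exact ⟨r, hi.1, h_return, fun l hl => h_inside l ⟨hl.1, hl.2.trans_lt hi.2⟩⟩
    have h_return_le := mem_Bblk_iff.1 h_return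
    have h_out_ge := not_lt.1 (mt mem_Btl_iff.2 h_out)
    change _ ≤ ∑ i ∈ Finset.range n, gain i
    rw [← Finset.sum_range_add_sum_Ico _ (hmr.trans hrn), ← Finset.sum_Ico_consecutive _ hmr hrn,
      h_gain_away, h_gain_inside]
    have h_gain_before : (k * N : ℤ) ≤ ∑ i ∈ Finset.range m, gain i := ih h_prev
    push_cast
    linarith

theorem excursionGain_eq_stepSum_add_localTime (hN : 0 < N)
    (hω : ∀ n, |(ω (n + 1)).2 - (ω n).2| ≤ 1) (n : ℕ) :
    (excursionGain d N j ω n : ℝ) =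
      stepSum (excursionSign d N j ω) (fun m => (ω m).2) n
        + localTime (fun m => (ω m).2) n (j * N) := by
  induction n with
  | zero => simp [excursionGain, stepSum, localTime]
  | succ n ih =>
    rw [excursionGain, Finset.sum_range_succ, ← excursionGain, Int.cast_add, ih, stepSum_succ,
      localTime_succ, excursionSign]
    by_cases h_exc : InExcursion d N j ω n
    · have h_step := congrArg (Int.cast : ℤ → ℝ) <| abs_eq_abs_add_sign_mul_sub
        (y := (ω n).2 - j * N) (y' := (ω (n + 1)).2 - j * N)
        (by simpa only [sub_sub_sub_cancel_right] using hω n)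
      simp only [sub_sub_sub_cancel_right, sub_eq_zero, ne_eq, sub_left_inj] at h_step
      rw [if_pos h_exc, if_pos h_exc]
      push_cast at h_step ⊢
      linarith
    · have h_level : (ω n).2 ≠ j * N := mt (inExcursion_of_height_eq hN) h_exc
      simp [h_exc, h_level]

theorem le_stepSum_excursionSign_of_DD_eq (hN : 0 < N)
    (hω : ∀ n, |(ω (n + 1)).2 - (ω n).2| ≤ 1) {K : ℝ} (hK : 2 * K ≤ k * N) {n : ℕ}
    (h_local : localTime (fun m => (ω m).2) n (j * N) ≤ K) (h : DD d N j k ω = n) :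
    K ≤ stepSum (excursionSign d N j ω) (fun m => (ω m).2) n := by
  have h_gain : ((k * N : ℤ) : ℝ) ≤ _ := Int.cast_le.2 (mul_le_excursionGain_of_DD_eq h)
  rw [excursionGain_eq_stepSum_add_localTime hN hω] at h_gain
  push_cast at h_gain
  linarith

theorem quadVar_excursionSign_le (hω : ∀ n, |(ω (n + 1)).2 - (ω n).2| ≤ 1) {K : ℝ} {n : ℕ}
    (h_local : ∀ z, localTime (fun m => (ω m).2) n z ≤ K) :
    quadVar (excursionSign d N j ω) (fun m => (ω m).2) n ≤ 4 * N * K := by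
  have hK : 0 ≤ K := (Nat.cast_nonneg _).trans (h_local 0)
  have h_card : ((Finset.Ioo (j * N - 2 * N) (j * N + 2 * N) : Finset ℤ).card : ℝ) ≤ 4 * N := by
    have h_nat : (Finset.Ioo (j * N - 2 * N) (j * N + 2 * N) : Finset ℤ).card ≤ 4 * N := by
      rw [Int.card_Ioo]
      omega
    exact_mod_cast h_nat
  calc quadVar (excursionSign d N j ω) (fun m => (ω m).2) n
      ≤ 1 * ((Finset.Ioo (j * N - 2 * N) (j * N + 2 * N) : Finset ℤ).card * K) := by
        refine quadVar_le_of_localTime_le hω (fun m hm => if_neg ?_) (fun m => ?_)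
          fun z _ => h_local z
        · rintro ⟨i, hi, -, h_stay⟩
          have h_near := abs_lt.1 (mem_Btl_iff.1 (h_stay m ⟨hi, le_rfl⟩))
          exact hm (Finset.mem_Ioo.2 ⟨by linarith, by linarith⟩)
        · rw [sq_le_one_iff_abs_le_one]
          split_ifs
          · exact abs_sign_le_one _
          · simp
    _ ≤ 4 * N * K := by
        rw [one_mul]
        gcongr

theorem measurable_excursionSign (d N : ℕ) (j : ℤ) (k : ℕ) :
    Measurable[Filtration.piLE (X := fun _ : ℕ => Cyl d N) k]
      fun ω => excursionSign d N j ω k := by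
  refine measurable_piLE_of_eq fun ω ω' h_eq => ?_
  have h_exc : InExcursion d N j ω k ↔ InExcursion d N j ω' k := by
    refine exists_congr fun i => and_congr_right fun hi => ?_
    rw [h_eq i hi]
    refine and_congr_right fun _ => forall₂_congr fun l hl => ?_
    rw [h_eq l hl.2]
  simp only [excursionSign, h_exc, h_eq k le_rfl]

theorem IsCylRW.measureReal_exists_DD_le {Pl : Cyl d N → Measure (ℕ → Cyl d N)}
    (hPl : IsCylRW d N Pl) (x : Cyl d N) (hN : 0 < N) {T : ℕ} (hT : 0 < T) {l : ℕ} {K : ℝ}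
    (hK : 2 ^ (l + 3) ≤ K) (hk : 2 * K ≤ k * N) (F : Finset ℤ) :
    (Pl x).real {ω | ∃ j ∈ F, ∃ n ≤ T, DD d N j k ω = n} ≤
      2 * Real.exp (-((2 ^ l) ^ 2 / (2 * T))) + 8 * Real.exp (-(K / (73728 * 2 ^ l)))
        + F.card * Real.exp (-(K / (8 * N))) := by
  have := hPl.1 x
  have hK₀ : 0 < K := (by positivity : (0 : ℝ) < 2 ^ (l + 3)).trans_le hK
  have : (0 : ℝ) < N := Nat.cast_pos.2 hN
  have h_walk := hPl.isLazySymmetricWalk_height x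
  have h_start : ∀ᵐ ω ∂Pl x, (ω 0).2 = x.2 := (hPl.ae_start_eq x).mono fun ω hω => by rw [hω]
  let crowded : Set (ℕ → Cyl d N) := {ω | ∃ n ≤ T, ∃ z, K < localTime (fun m => (ω m).2) n z}
  let displaced (j : ℤ) : Set (ℕ → Cyl d N) :=
    {ω | ∃ n ≤ T, K ≤ stepSum (excursionSign d N j ω) (fun m => (ω m).2) n ∧
      quadVar (excursionSign d N j ω) (fun m => (ω m).2) n ≤ 4 * N * K}
  have h_displaced (j : ℤ) : (Pl x).real (displaced j) ≤ Real.exp (-(K / (8 * N))) := by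
    have h_exponent : K / (8 * N) = K ^ 2 / (2 * (4 * N * K)) := by field_simp; norm_num
    rw [h_exponent]
    exact h_walk.measureReal_exists_le_stepSum_le (measurable_excursionSign d N j) T hK₀.le
      (by positivity)
  have h_cover : ∀ᵐ ω ∂Pl x, ω ∈ {ω | ∃ j ∈ F, ∃ n ≤ T, DD d N j k ω = n} →
      ω ∈ crowded ∪ ⋃ j ∈ F, displaced j := by
    filter_upwards [h_walk.abs_step_le] with ω h_step ⟨j, hj, n, hn, h_DD⟩
    refine or_iff_not_imp_left.2 fun h_sparse => ?_
    have h_local (z : ℤ) : localTime (fun m => (ω m).2) n z ≤ K :=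
      not_lt.1 fun h_lt => h_sparse ⟨n, hn, z, h_lt⟩
    exact Set.mem_biUnion hj ⟨n, hn,
      le_stepSum_excursionSign_of_DD_eq hN h_step hk (h_local _) h_DD,
      quadVar_excursionSign_le h_step h_local⟩
  calc (Pl x).real {ω | ∃ j ∈ F, ∃ n ≤ T, DD d N j k ω = n}
      ≤ (Pl x).real crowded + ∑ j ∈ F, (Pl x).real (displaced j) :=
        (measureReal_le_of_ae_imp h_cover).trans <| (measureReal_union_le _ _).trans <|
          add_le_add_right (measureReal_biUnion_finset_le F displaced) _
    _ ≤ _ := by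
        rw [← nsmul_eq_mul]
        exact add_le_add (h_walk.measureReal_exists_lt_localTime_le h_start hT hK)
          (Finset.sum_le_card_nsmul F _ _ fun j _ => h_displaced j)

end Excursion

section UniformStart

variable {d N : ℕ} {Pl : Cyl d N → Measure (ℕ → Cyl d N)}

theorem card_Icc_neg_self (m : ℕ) : (Finset.Icc (-(m : ℤ)) m).card = 2 * m + 1 := by
  rw [Int.card_Icc]
  omega

theorem encard_Bblk_zero (hN : 0 < N) : (Bblk d N 0).encard = N ^ d * (2 * N + 1) := by
  have : NeZero N := ⟨hN.ne'⟩
  have h_prod : Bblk d N 0 = Set.univ ×ˢ ((Finset.Icc (-N : ℤ) N : Finset ℤ) : Set ℤ) := by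
    ext x
    simp [Bblk]
  rw [h_prod, Set.encard_prod, Set.encard_univ, Set.encard_coe_eq_coe_finsetCard,
    card_Icc_neg_self]
  simp

theorem lawP_apply (A : Set (ℕ → Cyl d N)) :
    lawP d N Pl A = ((N : ℝ≥0∞) ^ d * (2 * N + 1))⁻¹ * ∑' x : Bblk d N 0, Pl x A := by
  rw [lawP, Measure.smul_apply, Measure.sum_apply_of_countable, smul_eq_mul,
    tsum_subtype (Bblk d N 0) fun x => Pl x A]
  congr! 3 with x
  simp only [Set.indicator_apply]
  split_ifs <;> simp

theorem lawP_le (hN : 0 < N) {A : Set (ℕ → Cyl d N)} {c : ℝ≥0∞} (h : ∀ x, Pl x A ≤ c) :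
    lawP d N Pl A ≤ c := by
  have h_sum : ∑' x : Bblk d N 0, Pl x A ≤ (N : ℝ≥0∞) ^ d * (2 * N + 1) * c :=
    calc ∑' x : Bblk d N 0, Pl x A ≤ ∑' _ : Bblk d N 0, c := ENNReal.tsum_le_tsum fun x => h x
      _ = (N : ℝ≥0∞) ^ d * (2 * N + 1) * c := by
          rw [ENNReal.tsum_set_const, encard_Bblk_zero hN]
          simp
  rw [lawP_apply, mul_comm, ← div_eq_mul_inv]
  exact ENNReal.div_le_of_le_mul' h_sum

theorem isProbabilityMeasure_lawP (hN : 0 < N) (hPl : ∀ x, IsProbabilityMeasure (Pl x)) :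
    IsProbabilityMeasure (lawP d N Pl) := by
  have h_ne_zero : (N : ℝ≥0∞) ^ d * (2 * N + 1) ≠ 0 := by
    have : (N : ℝ≥0∞) ≠ 0 := Nat.cast_ne_zero.2 hN.ne'
    positivity
  have h_ne_top : (N : ℝ≥0∞) ^ d * (2 * N + 1) ≠ ⊤ := by
    exact_mod_cast ENNReal.natCast_ne_top (N ^ d * (2 * N + 1))
  refine ⟨?_⟩
  simp only [lawP_apply, measure_univ]
  rw [ENNReal.tsum_set_one, encard_Bblk_zero hN]
  simpa using ENNReal.inv_mul_cancel h_ne_zero h_ne_top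

theorem one_sub_le_lawP_real (hN : 0 < N) (hPl : ∀ x, IsProbabilityMeasure (Pl x))
    {A : Set (ℕ → Cyl d N)} {c : ℝ} (h : ∀ x, (Pl x).real Aᶜ ≤ c) :
    1 - c ≤ (lawP d N Pl).real A := by
  have := isProbabilityMeasure_lawP hN hPl
  have hc : 0 ≤ c := measureReal_nonneg.trans (h 0)
  have h_compl : (lawP d N Pl).real Aᶜ ≤ c :=
    ENNReal.toReal_le_of_le_ofReal hc <| lawP_le hN fun x =>
      (ENNReal.le_ofReal_iff_toReal_le (measure_ne_top _ _) hc).2 (h x)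
  have h_union := measureReal_union_le (μ := lawP d N Pl) A Aᶜ
  rw [Set.union_compl_self, probReal_univ] at h_union
  linarith

end UniformStart

section LateDepartures

/-- The event `D_{γ,t}`: every block `j` with `|j| ≤ 2N^{2d-1}` sees its `⌊t⌋`-th departure only
after time `γN^{2d}`. -/
def lateDepartures (d N : ℕ) (t γ : ℝ) : Set (ℕ → Cyl d N) :=
  {ω | ∀ j : ℤ, |j| ≤ 2 * (N : ℤ) ^ (2 * d - 1) →
    gtReal (DD d N j ⌊t⌋₊ ω) (γ * (N : ℝ) ^ (2 * d))}

variable {d N : ℕ}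

theorem compl_lateDepartures_subset (t γ : ℝ) :
    (lateDepartures d N t γ)ᶜ ⊆
      {ω | ∃ j ∈ Finset.Icc (-(2 * (N : ℤ) ^ (2 * d - 1))) (2 * (N : ℤ) ^ (2 * d - 1)),
        ∃ n ≤ ⌊γ * (N : ℝ) ^ (2 * d)⌋₊, DD d N j ⌊t⌋₊ ω = n} := by
  intro ω hω
  simp only [lateDepartures, gtReal, Set.mem_compl_iff, Set.mem_ofPred_eq, not_forall, not_lt]
    at hω
  obtain ⟨j, hj, n, hn, hle⟩ := hω
  exact ⟨j, Finset.mem_Icc.2 (abs_le.1 hj), n, Nat.le_floor hle, hn⟩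

theorem half_mul_pow_le_floor_mul (hd : 2 ≤ d) (hN : 0 < N) {u : ℝ} (hu : 2 ≤ u * N) :
    u * N ^ d / 2 ≤ ⌊u * (N : ℝ) ^ (d - 1)⌋₊ * (N : ℝ) := by
  have hN' : (1 : ℝ) ≤ N := mod_cast hN
  have hu₀ : 0 < u := pos_of_mul_pos_left (two_pos.trans_le hu) (by positivity)
  have h_pow : (N : ℝ) ^ d = N ^ (d - 1) * N := (pow_sub_one_mul (by omega) _).symm
  have h_two : 2 ≤ u * (N : ℝ) ^ (d - 1) := hu.trans <|
    mul_le_mul_of_nonneg_left (le_self_pow₀ hN' (by omega)) hu₀.le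
  have h_floor : u * (N : ℝ) ^ (d - 1) / 2 ≤ ⌊u * (N : ℝ) ^ (d - 1)⌋₊ := by
    linarith [Nat.lt_floor_add_one (u * (N : ℝ) ^ (d - 1))]
  rw [h_pow]
  nlinarith

theorem exists_two_pow_scale {X T u γ δ : ℝ} (hX : 0 < X) (hT : 0 < T) (hTγ : T ≤ γ * X ^ 2)
    (hδ : 1 ≤ δ * X) (hδu : δ ≤ u / 32) :
    ∃ l : ℕ, 2 ^ (l + 3) ≤ u * X / 4 ∧ δ ^ 2 / 8 / γ ≤ (2 ^ l) ^ 2 / (2 * T) ∧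
      u / 294912 / δ ≤ u * X / 4 / (73728 * 2 ^ l) := by
  have hδ₀ : 0 < δ := pos_of_mul_pos_left (one_pos.trans_le hδ) hX.le
  have hγ₀ : 0 < γ := pos_of_mul_pos_left (hT.trans_le hTγ) (sq_nonneg X)
  have hu₀ : 0 < u := by linarith
  obtain ⟨l, hl_le, hl_lt⟩ := exists_nat_pow_near hδ one_lt_two
  rw [pow_succ] at hl_lt
  refine ⟨l, ?_, ?_, ?_⟩
  · rw [pow_add]
    nlinarith
  · calc δ ^ 2 / 8 / γ = (δ * X / 2) ^ 2 / (2 * (γ * X ^ 2)) := by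
          field_simp
          norm_num
      _ ≤ (2 ^ l) ^ 2 / (2 * T) := by
          gcongr
          linarith
  · calc u / 294912 / δ = u * X / 4 / (73728 * (δ * X)) := by
          field_simp
          norm_num
      _ ≤ u * X / 4 / (73728 * 2 ^ l) := by gcongr

theorem IsCylRW.measureReal_compl_lateDepartures_le {Pl : Cyl d N → Measure (ℕ → Cyl d N)}
    (hPl : IsCylRW d N Pl) (x : Cyl d N) (hd : 2 ≤ d) (hN : 0 < N) {u γ δ : ℝ} (hu : 2 ≤ u * N)
    (hδ : 1 ≤ δ * N ^ d) (hδu : δ ≤ u / 32) (hγ : 1 ≤ γ * N ^ (2 * d)) :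
    (Pl x).real (lateDepartures d N (u * N ^ (d - 1)) γ)ᶜ ≤
      2 * Real.exp (-(δ ^ 2 / 8 / γ)) + 8 * Real.exp (-(u / 294912 / δ))
        + (4 * N ^ (2 * d - 1) + 1) * Real.exp (-(u / 32 * N)) := by
  have := hPl.1 x
  have hT : 0 < ⌊γ * (N : ℝ) ^ (2 * d)⌋₊ := Nat.floor_pos.2 hγ
  have hT_le : (⌊γ * (N : ℝ) ^ (2 * d)⌋₊ : ℝ) ≤ γ * ((N : ℝ) ^ d) ^ 2 := by
    rw [← pow_mul, mul_comm d]
    exact Nat.floor_le (one_pos.trans_le hγ).le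
  obtain ⟨l, hK, h_height, h_localTime⟩ :=
    exists_two_pow_scale (by positivity) (Nat.cast_pos.2 hT) hT_le hδ hδu
  have hk : 2 * (u * N ^ d / 4) ≤ ⌊u * (N : ℝ) ^ (d - 1)⌋₊ * (N : ℝ) := by
    linarith [half_mul_pow_le_floor_mul hd hN hu]
  have h_drift : u / 32 * N ≤ u * N ^ d / 4 / (8 * N) :=
    calc u / 32 * N ≤ u / 32 * N ^ (d - 1) := by
          have hN' : (1 : ℝ) ≤ N := mod_cast hN
          have hu₀ : 0 < u := pos_of_mul_pos_left (two_pos.trans_le hu) N.cast_nonneg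
          gcongr
          exact le_self_pow₀ hN' (by omega)
      _ = u * N ^ d / 4 / (8 * N) := by
          rw [← pow_sub_one_mul (by omega : d ≠ 0) (N : ℝ)]
          field_simp
          ring
  have h_card : ((Finset.Icc (-(2 * (N : ℤ) ^ (2 * d - 1)))
      (2 * (N : ℤ) ^ (2 * d - 1))).card : ℝ) = 4 * N ^ (2 * d - 1) + 1 := by
    have := card_Icc_neg_self (2 * N ^ (2 * d - 1))
    push_cast at this
    rw [this]
    push_cast
    ring
  refine (measureReal_mono (compl_lateDepartures_subset _ _)).trans <|
    (hPl.measureReal_exists_DD_le x hN hT hK hk _).trans ?_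
  rw [h_card]
  gcongr

end LateDepartures

section Limits

theorem tendsto_eval_mul_exp_neg (p : Polynomial ℝ) {c : ℝ} (hc : 0 < c) :
    Tendsto (fun N : ℕ => p.eval (N : ℝ) * Real.exp (-(c * N))) atTop (nhds 0) := by
  have h_lin : Tendsto (fun N : ℕ => c * (N : ℝ)) atTop atTop :=
    tendsto_natCast_atTop_atTop.const_mul_atTop hc
  refine ((p.comp (.C c⁻¹ * .X)).tendsto_div_exp_atTop.comp h_lin).congr fun N => ?_
  simp [Polynomial.eval_comp, Real.exp_neg, div_eq_mul_inv, hc.ne']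

theorem tendsto_exp_neg_div_nhdsGT_zero {c : ℝ} (hc : 0 < c) :
    Tendsto (fun x => Real.exp (-(c / x))) (nhdsWithin 0 (Set.Ioi 0)) (nhds 0) := by
  simp only [div_eq_mul_inv]
  exact Real.tendsto_exp_neg_atTop_nhds_zero.comp (tendsto_inv_nhdsGT_zero.const_mul_atTop hc)

theorem tendsto_liminf_of_eventually_le {α ι κ : Type*} [ConditionallyCompleteLinearOrder α]
    [DenselyOrdered α] [NoMinOrder α] [TopologicalSpace α] [OrderTopology α] {l : Filter ι}
    {l' : Filter κ} [l'.NeBot] {f : ι → κ → α} {a : α} (h_le : ∀ i, ∀ᶠ n in l', f i n ≤ a)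
    (h_ge : ∀ b < a, ∀ᶠ i in l, ∀ᶠ n in l', b ≤ f i n) :
    Tendsto (fun i => liminf (f i) l') l (nhds a) := by
  have h_bound {b : α} (hb : b < a) : ∀ᶠ i in l, b ≤ liminf (f i) l' ∧ liminf (f i) l' ≤ a := by
    filter_upwards [h_ge b hb] with i hi
    have h_below : l'.IsBoundedUnder (· ≥ ·) (f i) := ⟨b, eventually_map.2 hi⟩
    have h_above : l'.IsBoundedUnder (· ≤ ·) (f i) := ⟨a, eventually_map.2 (h_le i)⟩
    exact ⟨le_liminf_of_le h_above.isCoboundedUnder_ge hi,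
      (liminf_le_limsup h_above h_below).trans (limsup_le_of_le h_below.isCoboundedUnder_le
        (h_le i))⟩
  refine tendsto_order.2 ⟨fun b hb => ?_, fun b hb => ?_⟩
  · obtain ⟨c, hbc, hca⟩ := exists_between hb
    exact (h_bound hca).mono fun i hi => hbc.trans_le hi.1
  · obtain ⟨c, hca⟩ := exists_lt a
    exact (h_bound hca).mono fun i hi => hi.2.trans_lt hb

end Limits

section Main

variable {d : ℕ} {Pl : ∀ N : ℕ, Cyl d N → Measure (ℕ → Cyl d N)}

theorem eventually_one_sub_le_lawP_lateDepartures (hd : 2 ≤ d) (hPl : ∀ N, IsCylRW d N (Pl N))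
    {u δ γ : ℝ} (hu : 0 < u) (hδ : 0 < δ) (hδu : δ ≤ u / 32) (hγ : 0 < γ) :
    ∀ᶠ N : ℕ in atTop,
      1 - (2 * Real.exp (-(δ ^ 2 / 8 / γ)) + 8 * Real.exp (-(u / 294912 / δ))
        + (4 * N ^ (2 * d - 1) + 1) * Real.exp (-(u / 32 * N))) ≤
        (lawP d N (Pl N)).real (lateDepartures d N (u * N ^ (d - 1)) γ) := by
  have h_pow {c : ℝ} (hc : 0 < c) {m : ℕ} (hm : m ≠ 0) :
      Tendsto (fun N : ℕ => c * (N : ℝ) ^ m) atTop atTop :=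
    ((tendsto_pow_atTop hm).comp tendsto_natCast_atTop_atTop).const_mul_atTop hc
  filter_upwards [(h_pow hu one_ne_zero).eventually_ge_atTop 2,
    (h_pow hδ (by omega : d ≠ 0)).eventually_ge_atTop 1,
    (h_pow hγ (by omega : 2 * d ≠ 0)).eventually_ge_atTop 1, eventually_gt_atTop 0]
    with N hN_u hN_δ hN_γ hN
  rw [pow_one] at hN_u
  exact one_sub_le_lawP_real hN (hPl N).1 fun x =>
    (hPl N).measureReal_compl_lateDepartures_le x hd hN hN_u hN_δ hδu hN_γ

theorem eventually_eventually_le_lawP_lateDepartures (hd : 2 ≤ d)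
    (hPl : ∀ N, IsCylRW d N (Pl N)) {u : ℝ} (hu : 0 < u) {b : ℝ} (hb : b < 1) :
    ∀ᶠ γ in nhdsWithin (0 : ℝ) (Set.Ioi 0), ∀ᶠ N : ℕ in atTop,
      b ≤ (lawP d N (Pl N)).real (lateDepartures d N (u * N ^ (d - 1)) γ) := by
  have hε : 0 < (1 - b) / 3 := by linarith
  have h_δ : Tendsto (fun δ => 8 * Real.exp (-(u / 294912 / δ))) (nhdsWithin 0 (Set.Ioi 0))
      (nhds 0) := by
    simpa using (tendsto_exp_neg_div_nhdsGT_zero (by positivity : 0 < u / 294912)).const_mul 8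
  obtain ⟨δ, h_err_δ, hδ, hδu⟩ := ((h_δ.eventually_le_const hε).and
    (Ioc_mem_nhdsGT (by positivity : 0 < u / 32))).exists
  have h_γ : Tendsto (fun γ => 2 * Real.exp (-(δ ^ 2 / 8 / γ))) (nhdsWithin 0 (Set.Ioi 0))
      (nhds 0) := by
    simpa using (tendsto_exp_neg_div_nhdsGT_zero (by positivity : 0 < δ ^ 2 / 8)).const_mul 2
  have h_N : Tendsto (fun N : ℕ => (4 * (N : ℝ) ^ (2 * d - 1) + 1) * Real.exp (-(u / 32 * N)))
      atTop (nhds 0) := by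
    simpa using tendsto_eval_mul_exp_neg (4 * .X ^ (2 * d - 1) + 1) (by positivity : 0 < u / 32)
  filter_upwards [h_γ.eventually_le_const hε, self_mem_nhdsWithin] with γ h_err_γ hγ
  filter_upwards [h_N.eventually_le_const hε,
    eventually_one_sub_le_lawP_lateDepartures hd hPl hu hδ hδu hγ] with N h_err_N h_main
  linarith

end Main

theorem statement_19_general (d : ℕ) (hd : 2 ≤ d)
    (Pl : ∀ N : ℕ, Cyl d N → Measure (ℕ → Cyl d N))
    (hPl : ∀ N : ℕ, IsCylRW d N (Pl N))
    (u : ℝ) (hu : 0 < u) :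
    Tendsto (fun γ : ℝ =>
        liminf (fun N : ℕ =>
          ((lawP d N (Pl N))
            {ω | ∀ j : ℤ, |j| ≤ 2 * (N : ℤ) ^ (2 * d - 1) →
              gtReal (DD d N j ⌊u * (N : ℝ) ^ (d - 1)⌋₊ ω) (γ * (N : ℝ) ^ (2 * d))}).toReal)
          atTop)
      (nhdsWithin 0 (Set.Ioi 0)) (nhds 1) := by
  have h_le_one (γ : ℝ) : ∀ᶠ N : ℕ in atTop,
      (lawP d N (Pl N)).real (lateDepartures d N (u * N ^ (d - 1)) γ) ≤ 1 := by
    filter_upwards [eventually_gt_atTop 0] with N hN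
    have := isProbabilityMeasure_lawP hN (hPl N).1
    exact measureReal_le_one
  exact tendsto_liminf_of_eventually_le h_le_one fun b hb =>
    eventually_eventually_le_lawP_lateDepartures hd hPl hu hb

/-- **(2.4).** If `d ≥ 4` and `7(2/(d+1) + (1 - 2/(d+1)) q(d-1)) < 1`, then for any
`u > 0`, `lim_{γ→0} liminf_N P[D_{γ, uN^{d-1}}] = 1`, where
`D_{γ,t} = ∩_{|j| ≤ 2N^{2d-1}} {D^j_t > γ N^{2d}}`. -/
theorem statement_19 (d : ℕ) (hd : 4 ≤ d)
    (Q : ZLat (d - 1) → Measure (ℕ → ZLat (d - 1))) (hQ : IsLatRW (d - 1) Q)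
    (hcond : 7 * (2 / ((d : ℝ) + 1) + (1 - 2 / ((d : ℝ) + 1)) * retProb (d - 1) Q) < 1)
    (Pl : ∀ N : ℕ, Cyl d N → Measure (ℕ → Cyl d N))
    (hPl : ∀ N : ℕ, IsCylRW d N (Pl N))
    (u : ℝ) (hu : 0 < u) :
    Tendsto (fun γ : ℝ =>
        liminf (fun N : ℕ =>
          ((lawP d N (Pl N))
            {ω | ∀ j : ℤ, |j| ≤ 2 * (N : ℤ) ^ (2 * d - 1) →
              gtReal (DD d N j ⌊u * (N : ℝ) ^ (d - 1)⌋₊ ω) (γ * (N : ℝ) ^ (2 * d))}).toReal)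
          atTop)
      (nhdsWithin 0 (Set.Ioi 0)) (nhds 1) :=
  statement_19_general d (by omega) Pl hPl u hu

end DiscCyl
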